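/- arXiv:2109.04944 — 2 statements merged into one kernel-verified Lean document; each statement's English description precedes it below -/
import Mathlib

section
/- Let 0 < β ≤ 1/3, let G be a cograph, and let w : V(G) → ℝ_{>0} be a weight function such that Σ_{v ∈ V(G)} w(v) = 1 and w(v) ≤ 1 − β for every v ∈ V(G). Then there is a partition V(G) = I ∪ J ∪ L such that w(I) ≥ β/2, w(J) ≥ β/2, w(L) < β, and the bipartite graph between I and J in G is complete or empty. -/
open Finset

/-- A graph is a cograph iff it contains no induced path on 4 vertices. -/
def IsCograph {V : Type} (G : SimpleGraph V) : Prop :=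
  ¬ ∃ a b c d : V, a ≠ b ∧ a ≠ c ∧ a ≠ d ∧ b ≠ c ∧ b ≠ d ∧ c ≠ d ∧
    G.Adj a b ∧ G.Adj b c ∧ G.Adj c d ∧ ¬ G.Adj a c ∧ ¬ G.Adj a d ∧ ¬ G.Adj b d

def SplitC {V : Type} [DecidableEq V] (G : SimpleGraph V) (S : Finset V) : Prop :=
  ∃ P Q : Finset V, P.Nonempty ∧ Q.Nonempty ∧ Disjoint P Q ∧ P ∪ Q = S ∧
    ((∀ a ∈ P, ∀ b ∈ Q, G.Adj a b) ∨ (∀ a ∈ P, ∀ b ∈ Q, ¬ G.Adj a b))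

lemma IsCograph.compl' {V : Type} {G : SimpleGraph V} (h : IsCograph G) : IsCograph Gᶜ := by
  rintro ⟨a, b, c, d, h1, h2, h3, h4, h5, h6, h7, h8, h9, h10, h11, h12⟩
  simp only [SimpleGraph.compl_adj, not_and, not_not] at *
  exact h ⟨b, d, a, c, h5, h1.symm, h4, h3.symm, h6.symm, h2, h12 h5, (h11 h3).symm, h10 h2,
    fun h => h7.2 h.symm, h8.2, fun h => h9.2 h.symm⟩

lemma SplitC.of_compl {V : Type} [DecidableEq V] {G : SimpleGraph V} {S : Finset V}
    (h : SplitC Gᶜ S) : SplitC G S := by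
  obtain ⟨P, Q, hP, hQ, hd, hu, h⟩ := h
  refine ⟨P, Q, hP, hQ, hd, hu, ?_⟩
  have hne : ∀ a ∈ P, ∀ b ∈ Q, a ≠ b := fun a ha b hb => Finset.disjoint_iff_ne.1 hd a ha b hb
  simp only [SimpleGraph.compl_adj, not_and, not_not] at h
  rcases h with h | h
  · exact Or.inr fun a ha b hb => (h a ha b hb).2
  · exact Or.inl fun a ha b hb => h a ha b hb (hne a ha b hb)

lemma split_step1 {V : Type} [DecidableEq V] {G : SimpleGraph V} (hG : IsCograph G)
    (P Q : Finset V) (v x : V) (hvP : v ∉ P) (hvQ : v ∉ Q) (hx : x ∈ P) (hxv : ¬ G.Adj x v)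
    (hQ : Q.Nonempty) (hd : Disjoint P Q) (he : ∀ a ∈ P, ∀ b ∈ Q, ¬ G.Adj a b) :
    SplitC G (insert v (P ∪ Q)) := by
  classical
  have hne : ∀ a ∈ P, ∀ b ∈ Q, a ≠ b := fun a ha b hb => Finset.disjoint_iff_ne.1 hd a ha b hb
  by_cases hz : ∃ z ∈ Q, G.Adj v z
  · obtain ⟨z, hzQ, hz⟩ := hz
    refine ⟨P.filter (fun y => ¬ G.Adj y v), insert v (Q ∪ P.filter (fun y => G.Adj y v)),
      ⟨x, by simp [hx, hxv]⟩, ⟨v, by simp⟩, ?_, ?_, Or.inr ?_⟩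
    · rw [Finset.disjoint_left]
      intro a ha hb
      simp only [Finset.mem_filter, Finset.mem_insert, Finset.mem_union] at ha hb
      rcases hb with rfl | hb | hb
      · exact hvP ha.1
      · exact hne a ha.1 a hb rfl
      · exact ha.2 hb.2
    · ext a
      simp only [Finset.mem_filter, Finset.mem_insert, Finset.mem_union]
      tauto
    · intro y hy u hu hyu
      simp only [Finset.mem_filter, Finset.mem_insert, Finset.mem_union] at hy hu
      rcases hu with rfl | hu | hu
      · exact hy.2 hyu
      · exact he y hy.1 u hu hyu
      · exact hG ⟨y, u, v, z, hyu.ne, fun h => hvP (h ▸ hy.1), hne y hy.1 z hzQ, hu.2.ne,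
          hne u hu.1 z hzQ, hz.ne, hyu, hu.2, hz, hy.2, he y hy.1 z hzQ, he u hu.1 z hzQ⟩
  · push Not at hz
    refine ⟨insert v P, Q, ⟨v, by simp⟩, hQ, ?_, by simp, Or.inr ?_⟩
    · simp [hvQ, hd]
    · intro a ha b hb
      rcases Finset.mem_insert.1 ha with rfl | ha
      · exact hz b hb
      · exact he a ha b hb

lemma split_step2 {V : Type} [DecidableEq V] {G : SimpleGraph V} (hG : IsCograph G)
    (P Q : Finset V) (v : V) (hvP : v ∉ P) (hvQ : v ∉ Q) (hP : P.Nonempty)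
    (hQ : Q.Nonempty) (hd : Disjoint P Q) (he : ∀ a ∈ P, ∀ b ∈ Q, ¬ G.Adj a b) :
    SplitC G (insert v (P ∪ Q)) := by
  by_cases h1 : ∃ x ∈ P, ¬ G.Adj x v
  · obtain ⟨x, hx, hxv⟩ := h1
    exact split_step1 hG P Q v x hvP hvQ hx hxv hQ hd he
  by_cases h2 : ∃ x ∈ Q, ¬ G.Adj x v
  · obtain ⟨x, hx, hxv⟩ := h2
    rw [Finset.union_comm]
    exact split_step1 hG Q P v x hvQ hvP hx hxv hP hd.symm
      (fun a ha b hb h => he b hb a ha h.symm)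
  push Not at h1 h2
  refine ⟨{v}, P ∪ Q, by simp, hP.mono Finset.subset_union_left, by simp [hvP, hvQ], rfl,
    Or.inl ?_⟩
  intro a ha b hb
  rw [Finset.mem_singleton.1 ha]
  rcases Finset.mem_union.1 hb with hb | hb
  · exact (h1 b hb).symm
  · exact (h2 b hb).symm

lemma split_all {V : Type} [DecidableEq V] {G : SimpleGraph V} (hG : IsCograph G)
    (S : Finset V) : 2 ≤ S.card → SplitC G S := by
  induction S using Finset.induction_on with
  | empty => simp
  | insert v T hv ih =>
    intro hc
    rw [Finset.card_insert_of_notMem hv] at hc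
    by_cases h2 : 2 ≤ T.card
    · obtain ⟨P, Q, hP, hQ, hd, rfl, h⟩ := ih h2
      simp only [Finset.mem_union, not_or] at hv
      rcases h with h | h
      · apply SplitC.of_compl
        exact split_step2 hG.compl' P Q v hv.1 hv.2 hP hQ hd (fun a ha b hb h' => by
          rw [SimpleGraph.compl_adj] at h'
          exact h'.2 (h a ha b hb))
      · exact split_step2 hG P Q v hv.1 hv.2 hP hQ hd h
    · obtain ⟨u, rfl⟩ := Finset.card_eq_one.1 (show T.card = 1 by omega)
      refine ⟨{v}, {u}, by simp, by simp, by simpa using hv, rfl, ?_⟩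
      by_cases h : G.Adj v u <;> simp [h]

def Good {V : Type} [Fintype V] [DecidableEq V] (G : SimpleGraph V) (β : ℝ) (w : V → ℝ) : Prop :=
  ∃ I J L : Finset V,
      Disjoint I J ∧ Disjoint I L ∧ Disjoint J L ∧
      I ∪ J ∪ L = Finset.univ ∧
      β / 2 ≤ ∑ v ∈ I, w v ∧
      β / 2 ≤ ∑ v ∈ J, w v ∧
      ∑ v ∈ L, w v < β ∧
      ((∀ a ∈ I, ∀ b ∈ J, G.Adj a b) ∨ (∀ a ∈ I, ∀ b ∈ J, ¬ G.Adj a b))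

lemma good_rec {V : Type} [Fintype V] [DecidableEq V]
    (G : SimpleGraph V) (hG : IsCograph G)
    (β : ℝ) (hβ0 : 0 < β) (hβ1 : β ≤ 1 / 3)
    (w : V → ℝ) (hsum : ∑ v, w v = 1) (hwv : ∀ v, w v ≤ 1 - β) (n : ℕ) :
    ∀ S A B : Finset V, S.card = n → Disjoint S A → Disjoint S B → Disjoint A B →
      S ∪ A ∪ B = Finset.univ → ∑ v ∈ A, w v < β / 2 → ∑ v ∈ B, w v < β / 2 →
      (∀ a ∈ A, ∀ s ∈ S, G.Adj a s) → (∀ b ∈ B, ∀ s ∈ S, ¬ G.Adj b s) → Good G β w := by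
  induction n using Nat.strong_induction_on with
  | _ n ih =>
  intro S A B hn hSA hSB hAB hU hA hB hcA hcB
  have htot : ∑ v ∈ S, w v + ∑ v ∈ A, w v + ∑ v ∈ B, w v = 1 := by
    rw [← hsum, ← hU, Finset.sum_union (by simp [hSB, hAB]), Finset.sum_union hSA]
  have hc : 2 ≤ S.card := by
    by_contra hlt
    rcases (show S.card = 0 ∨ S.card = 1 by omega) with h | h
    · rw [Finset.card_eq_zero.1 h] at htot
      simp at htot
      linarith
    · obtain ⟨x, rfl⟩ := Finset.card_eq_one.1 h
      simp at htot
      linarith [hwv x]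
  obtain ⟨P, Q, hP, hQ, hd, hPQ, h⟩ := split_all hG S hc
  wlog hle : ∑ v ∈ Q, w v ≤ ∑ v ∈ P, w v generalizing P Q
  · refine this Q P hQ hP hd.symm (by rw [Finset.union_comm, hPQ]) ?_ (le_of_not_ge hle)
    rcases h with h | h
    · exact Or.inl fun a ha b hb => (h b hb a ha).symm
    · exact Or.inr fun a ha b hb h' => h b hb a ha h'.symm
  subst hPQ
  rw [Finset.sum_union hd] at htot
  rw [Finset.disjoint_union_left] at hSA hSB
  have hPlt : P.card < n := by
    rw [← hn, Finset.card_union_of_disjoint hd]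
    have := hQ.card_pos
    omega
  by_cases hQb : β / 2 ≤ ∑ v ∈ Q, w v
  · refine ⟨P, Q, A ∪ B, hd, ?_, ?_, ?_, by linarith, hQb, ?_, h⟩
    · simp [hSA.1, hSB.1]
    · simp [hSA.2, hSB.2]
    · rw [← hU]; simp [Finset.union_assoc]
    · rw [Finset.sum_union hAB]; linarith
  rcases h with h | h
  · have hcA' : ∀ a ∈ A ∪ Q, ∀ s ∈ P, G.Adj a s := by
      intro a ha s hs
      rcases Finset.mem_union.1 ha with ha | ha
      · exact hcA a ha s (Finset.mem_union_left _ hs)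
      · exact (h s hs a ha).symm
    have hs : ∑ v ∈ A ∪ Q, w v = ∑ v ∈ A, w v + ∑ v ∈ Q, w v := Finset.sum_union hSA.2.symm
    have hU' : P ∪ (A ∪ Q) ∪ B = Finset.univ := by
      rw [← hU]; ext a; simp only [Finset.mem_union]; tauto
    have d1 : Disjoint P (A ∪ Q) := by simp [hSA.1, hd]
    have d2 : Disjoint (A ∪ Q) B := by simp [hAB, hSB.2]
    by_cases hAQ : β / 2 ≤ ∑ v ∈ A ∪ Q, w v
    · refine ⟨A ∪ Q, P, B, d1.symm, d2, hSB.1, ?_, hAQ, by linarith, by linarith, Or.inl hcA'⟩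
      rw [← hU', Finset.union_comm P]
    · exact ih _ hPlt P (A ∪ Q) B rfl d1 hSB.1 d2 hU' (lt_of_not_ge hAQ) hB hcA'
        fun b hb s hs => hcB b hb s (Finset.mem_union_left _ hs)
  · have hcB' : ∀ a ∈ B ∪ Q, ∀ s ∈ P, ¬ G.Adj a s := by
      intro a ha s hs
      rcases Finset.mem_union.1 ha with ha | ha
      · exact hcB a ha s (Finset.mem_union_left _ hs)
      · exact fun h' => h s hs a ha h'.symm
    have hs : ∑ v ∈ B ∪ Q, w v = ∑ v ∈ B, w v + ∑ v ∈ Q, w v := Finset.sum_union hSB.2.symm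
    have hU' : P ∪ A ∪ (B ∪ Q) = Finset.univ := by
      rw [← hU]; ext a; simp only [Finset.mem_union]; tauto
    have d1 : Disjoint P (B ∪ Q) := by simp [hSB.1, hd]
    have d2 : Disjoint A (B ∪ Q) := by simp [hAB, hSA.2.symm]
    by_cases hAQ : β / 2 ≤ ∑ v ∈ B ∪ Q, w v
    · refine ⟨B ∪ Q, P, A, d1.symm, d2.symm, hSA.1, ?_, hAQ, by linarith, by linarith, Or.inr hcB'⟩
      rw [← hU']; ext a; simp only [Finset.mem_union]; tauto
    · exact ih _ hPlt P A (B ∪ Q) rfl hSA.1 d1 d2 hU' hA (lt_of_not_ge hAQ)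
        (fun b hb s hs => hcA b hb s (Finset.mem_union_left _ hs)) hcB'

/-- Weighted partition lemma for cographs. -/
theorem weighted_cograph_partition {V : Type} [Fintype V] [DecidableEq V]
    (G : SimpleGraph V) (hG : IsCograph G)
    (β : ℝ) (hβ0 : 0 < β) (hβ1 : β ≤ 1 / 3)
    (w : V → ℝ) (hw : ∀ v, 0 < w v)
    (hsum : ∑ v, w v = 1) (hwv : ∀ v, w v ≤ 1 - β) :
    ∃ I J L : Finset V,
      Disjoint I J ∧ Disjoint I L ∧ Disjoint J L ∧
      I ∪ J ∪ L = Finset.univ ∧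
      β / 2 ≤ ∑ v ∈ I, w v ∧
      β / 2 ≤ ∑ v ∈ J, w v ∧
      ∑ v ∈ L, w v < β ∧
      ((∀ a ∈ I, ∀ b ∈ J, G.Adj a b) ∨ (∀ a ∈ I, ∀ b ∈ J, ¬ G.Adj a b)) := by
  exact good_rec G hG β hβ0 hβ1 w hsum hwv _ Finset.univ ∅ ∅ rfl (by simp) (by simp) (by simp)
    (by simp) (by simpa using hβ0) (by simpa using hβ0) (by simp) (by simp)
end

section
/- There is an absolute constant C > 0 such that the following holds with δ(ξ,ε) = (ξε)^C / C and n₁(ξ,ε) = C·(ξε)^{-C}, for all ξ, ε ∈ (0,1). Let H be a 3-uniform hypergraph on n ≥ n₁(ξ,ε) vertices and let v ∈ V(H) be such that: (1) ξ ≤ d(L(v)) ≤ 1 − ξ; (2) H contains fewer than δ(ξ,ε)·n⁴ induced copies of D₂; (3) H contains fewer than δ(ξ,ε)·n³ induced copies of D₂ containing v. Then there is a partition V(H) = X ∪ Y ∪ S such that |X|, |Y| ≥ (ξ/10)·n, |S| ≤ (ξ/2)·n, and (X,Y) is ε-homogeneous. -/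
open Finset

/-- The number of induced copies of `D₂` (4 vertices spanning exactly 2 edges). -/
def inducedD2Count {V : Type} [Fintype V] [DecidableEq V] (E : Finset (Finset V)) : ℕ :=
  (((Finset.univ : Finset V).powersetCard 4).filter
    (fun S => (E.filter (fun e => e ⊆ S)).card = 2)).card

/-- The number of induced copies of `D₂` which contain the vertex `v`. -/
def inducedD2CountVia {V : Type} [Fintype V] [DecidableEq V]
    (E : Finset (Finset V)) (v : V) : ℕ :=
  (((Finset.univ : Finset V).powersetCard 4).filter
    (fun S => v ∈ S ∧ (E.filter (fun e => e ⊆ S)).card = 2)).card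

/-- The density of the link graph of `v`: the number of hyperedges containing `v`,
divided by `C(n-1, 2)`. -/
noncomputable def dLinkDensity {V : Type} [Fintype V] [DecidableEq V]
    (E : Finset (Finset V)) (v : V) : ℝ :=
  ((E.filter (fun e => v ∈ e)).card : ℝ) / ((Fintype.card V - 1).choose 2 : ℝ)

/-- `e(X,X,Y)`: the number of edges with two vertices in `X` and one vertex in `Y`. -/
def eXXY {V : Type} [DecidableEq V] (E : Finset (Finset V)) (X Y : Finset V) : ℕ :=
  (E.filter (fun e => (e ∩ X).card = 2 ∧ (e ∩ Y).card = 1)).card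

/-- `d(X,X,Y) = e(X,X,Y) / (C(|X|,2)·|Y|)`. -/
noncomputable def dXXY {V : Type} [DecidableEq V] (E : Finset (Finset V))
    (X Y : Finset V) : ℝ :=
  (eXXY E X Y : ℝ) / ((X.card.choose 2 : ℝ) * (Y.card : ℝ))

/-- The pair `(X,Y)` is `ε`-homogeneous. -/
noncomputable def EpsHomogeneous {V : Type} [DecidableEq V]
    (E : Finset (Finset V)) (X Y : Finset V) (ε : ℝ) : Prop :=
  (dXXY E X Y ≥ 1 - ε ∧ dXXY E Y X ≥ 1 - ε) ∨ (dXXY E X Y ≤ ε ∧ dXXY E Y X ≤ ε)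


open Classical in
noncomputable def ind (p : Prop) : ℝ := if p then 1 else 0

lemma ind_nonneg (p : Prop) : 0 ≤ ind p := by unfold ind; split_ifs <;> norm_num
lemma ind_le_one (p : Prop) : ind p ≤ 1 := by unfold ind; split_ifs <;> norm_num
lemma ind_true {p : Prop} (h : p) : ind p = 1 := by unfold ind; simp [h]
lemma ind_false {p : Prop} (h : ¬ p) : ind p = 0 := by unfold ind; simp [h]

def IsP4 {V : Type} (G : SimpleGraph V) (w x y z : V) : Prop :=
  G.Adj w x ∧ G.Adj x y ∧ G.Adj y z ∧ ¬ G.Adj w y ∧ ¬ G.Adj w z ∧ ¬ G.Adj x z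

lemma IsP4.of_compl {V : Type} {G : SimpleGraph V} {w x y z : V} (h : IsP4 Gᶜ w x y z) :
    IsP4 G y w z x := by
  unfold IsP4 at *
  obtain ⟨h1, h2, h3, h4, h5, h6⟩ := h
  have a1 : w ≠ y := by rintro rfl; exact h5 h3
  have a2 : w ≠ z := by rintro rfl; exact h6 h1.symm
  have a3 : x ≠ z := by rintro rfl; exact h5 h1
  simp only [SimpleGraph.compl_adj, not_and, not_not] at *
  exact ⟨(h4 a1).symm, h5 a2, (h6 a3).symm, fun h => h3.2 h, fun h => h2.2 h.symm, h1.2⟩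

noncomputable def ec {V : Type} (G : SimpleGraph V) (A B : Finset V) : ℝ :=
  ∑ a ∈ A, ∑ b ∈ B, ind (G.Adj a b)

noncomputable def qi {V : Type} [DecidableEq V] (Q : Finset V → Prop) (a b c d : V) : ℝ :=
  ind (Q {a, b, c, d})

lemma qi_nonneg {V : Type} [DecidableEq V] (Q : Finset V → Prop) (a b c d : V) :
    0 ≤ qi Q a b c d := ind_nonneg _

lemma qi_one {V : Type} [DecidableEq V] {Q : Finset V → Prop} {a b c d : V} {S : Finset V}
    (h : Q S) (e : S = {a, b, c, d}) : qi Q a b c d = 1 := by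
  subst e; exact ind_true h

lemma sum_ind_le_card {V : Type} (A : Finset V) (p : V → Prop) :
    ∑ a ∈ A, ind (p a) ≤ (A.card : ℝ) := by
  calc _ ≤ ∑ a ∈ A, (1 : ℝ) := Finset.sum_le_sum (fun a _ => ind_le_one _)
    _ = _ := by simp

lemma sum_ind_eq {V : Type} (A : Finset V) (p : V → Prop) [DecidablePred p] :
    ∑ a ∈ A, ind (p a) = ((A.filter p).card : ℝ) := by
  classical
  rw [Finset.card_filter]; push_cast
  refine Finset.sum_congr rfl fun a _ => ?_
  unfold ind; congr

/-- Markov. -/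
lemma markov {V : Type} (A : Finset V) (f : V → ℝ) (hf : ∀ a ∈ A, 0 ≤ f a) (t : ℝ)
    [DecidablePred fun a => t < f a] :
    ((A.filter (fun a => t < f a)).card : ℝ) * t ≤ ∑ a ∈ A, f a := by
  calc _ = ∑ a ∈ A.filter (fun a => t < f a), t := by simp
    _ ≤ ∑ a ∈ A.filter (fun a => t < f a), f a :=
      Finset.sum_le_sum fun a ha => (Finset.mem_filter.1 ha).2.le
    _ ≤ _ := Finset.sum_le_sum_of_subset_of_nonneg (Finset.filter_subset _ _)
      (fun a ha _ => hf a ha)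

lemma pt1 {V : Type} [DecidableEq V] {G : SimpleGraph V} {Q : Finset V → Prop}
    (hP : ∀ w x y z, IsP4 G w x y z → Q {w, x, y, z}) {u a x c d : V}
    (hua : G.Adj u a) (hux : G.Adj u x) (hxc : G.Adj x c) (huc : ¬ G.Adj u c)
    (hac : ¬ G.Adj a c) (had : G.Adj a d) (hxd : ¬ G.Adj x d) (hud : ¬ G.Adj u d) :
    1 ≤ qi Q a x c d + qi Q u a c d + qi Q u a x c := by
  have n1 := qi_nonneg Q a x c d
  have n2 := qi_nonneg Q u a c d
  have n3 := qi_nonneg Q u a x c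
  by_cases hxa : G.Adj x a
  · by_cases hcd : G.Adj c d
    · have h := hP u a d c ⟨hua, had, hcd.symm, hud, huc, hac⟩
      have := qi_one (a := u) (b := a) (c := c) (d := d) h (by ext; simp; tauto)
      linarith
    · have h := hP c x a d ⟨hxc.symm, hxa, had, fun h => hac h.symm, hcd, hxd⟩
      have := qi_one (a := a) (b := x) (c := c) (d := d) h (by ext; simp; tauto)
      linarith
  · have h := hP c x u a ⟨hxc.symm, hux.symm, hua, fun h => huc h.symm, fun h => hac h.symm, hxa⟩
    have := qi_one (a := u) (b := a) (c := x) (d := c) h (by ext; simp; tauto)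
    linarith

set_option maxHeartbeats 1000000 in
lemma subA {V : Type} [DecidableEq V] {G : SimpleGraph V} {Q : Finset V → Prop}
    (hP : ∀ w x y z, IsP4 G w x y z → Q {w, x, y, z}) (W M M' B : Finset V) (u a : V)
    (s β : ℝ) (hs : 0 < s) (hua : G.Adj u a) (haW : a ∈ W)
    (hM : ∀ x, x ∈ M ↔ x ∈ W ∧ x ≠ u ∧ ¬ G.Adj u x)
    (hM' : ∀ x, x ∈ M' ↔ x ∈ M ∧ ¬ G.Adj a x)
    (hmax : ∀ x ∈ W, x ∉ B → G.Adj u x →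
      ∑ d ∈ M, ind (G.Adj x d) ≤ ∑ d ∈ M, ind (G.Adj a d))
    (hB : (B.card : ℝ) ≤ β * W.card)
    (hp2 : ∑ y ∈ W, ∑ z ∈ W, qi Q u a y z ≤ s ^ 2 * (W.card : ℝ) ^ 2)
    (hp3 : ∑ x ∈ W, ∑ y ∈ W, ∑ z ∈ W, qi Q a x y z ≤ s ^ 2 * (W.card : ℝ) ^ 3) :
    ec G (W \ M') M' ≤ (2 * s + β) * (W.card : ℝ) ^ 2 := by
  classical
  set m : ℝ := (W.card : ℝ) with hm
  have hm0 : 0 < m := by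
    have : 0 < W.card := Finset.card_pos.2 ⟨a, haW⟩
    rw [hm]; exact_mod_cast this
  have hMW : M ⊆ W := fun x hx => ((hM x).1 hx).1
  have hM'M : M' ⊆ M := fun x hx => ((hM' x).1 hx).1
  have hM'W : M' ⊆ W := hM'M.trans hMW
  have hM'c : (M'.card : ℝ) ≤ m := by rw [hm]; exact_mod_cast Finset.card_le_card hM'W
  let k : V → ℝ := fun x => ∑ c ∈ M', ind (G.Adj x c)
  have hk0 : ∀ x, 0 ≤ k x := fun x => Finset.sum_nonneg fun _ _ => ind_nonneg _
  have hkm : ∀ x, k x ≤ m := fun x => (sum_ind_le_card _ _).trans hM'c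
  have hq0 := qi_nonneg Q
  -- pointwise
  have key : ∀ x ∈ W \ M', x ∉ B → k x ^ 2 ≤ (∑ c ∈ W, ∑ d ∈ W, qi Q a x c d)
      + (∑ c ∈ W, ∑ d ∈ W, qi Q u a c d) + m * ∑ c ∈ W, qi Q u a x c := by
    intro x hx hxB
    have hxW := (Finset.mem_sdiff.1 hx).1
    have hxM' := (Finset.mem_sdiff.1 hx).2
    have t1 : 0 ≤ (∑ c ∈ W, ∑ d ∈ W, qi Q a x c d) :=
      Finset.sum_nonneg fun _ _ => Finset.sum_nonneg fun _ _ => hq0 _ _ _ _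
    have t2 : 0 ≤ (∑ c ∈ W, ∑ d ∈ W, qi Q u a c d) :=
      Finset.sum_nonneg fun _ _ => Finset.sum_nonneg fun _ _ => hq0 _ _ _ _
    by_cases hux : G.Adj u x
    · -- D
      have hD : k x ≤ ∑ d ∈ M, ind (G.Adj a d ∧ ¬ G.Adj x d) := by
        have h1 := hmax x hxW hxB hux
        have h2 : k x = ∑ d ∈ M, ind (G.Adj x d ∧ ¬ G.Adj a d) := by
          have e : M' = M.filter (fun c => ¬ G.Adj a c) := by
            ext y; simp [hM']
          show ∑ c ∈ M', ind (G.Adj x c) = _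
          rw [e, Finset.sum_filter]
          refine Finset.sum_congr rfl fun y _ => ?_
          by_cases h : G.Adj a y <;> simp [h, ind]
        have h3 : ∀ d, ind (G.Adj x d) - ind (G.Adj x d ∧ ¬ G.Adj a d)
            = ind (G.Adj a d) - ind (G.Adj a d ∧ ¬ G.Adj x d) := by
          intro d
          by_cases h : G.Adj a d <;> by_cases h' : G.Adj x d <;> simp [h, h', ind]
        have h4 : ∑ d ∈ M, (ind (G.Adj x d) - ind (G.Adj x d ∧ ¬ G.Adj a d))
          = ∑ d ∈ M, (ind (G.Adj a d) - ind (G.Adj a d ∧ ¬ G.Adj x d)) :=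
          Finset.sum_congr rfl fun d _ => h3 d
        rw [Finset.sum_sub_distrib, Finset.sum_sub_distrib] at h4
        linarith
      have hsq : k x ^ 2 ≤ ∑ c ∈ M', ∑ d ∈ M, ind (G.Adj x c) * ind (G.Adj a d ∧ ¬ G.Adj x d) := by
        rw [← Finset.sum_mul_sum, sq]
        exact mul_le_mul_of_nonneg_left hD (hk0 x)
      have hle : ∀ c ∈ M', ∀ d ∈ M, ind (G.Adj x c) * ind (G.Adj a d ∧ ¬ G.Adj x d)
          ≤ qi Q a x c d + qi Q u a c d + qi Q u a x c := by
        intro c hc d hd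
        have n1 := hq0 a x c d
        have n2 := hq0 u a c d
        have n3 := hq0 u a x c
        by_cases h1 : G.Adj x c
        · by_cases h2 : G.Adj a d ∧ ¬ G.Adj x d
          · rw [ind_true h1, ind_true h2, one_mul]
            exact pt1 hP hua hux h1 ((hM c).1 (hM'M hc)).2.2 ((hM' c).1 hc).2 h2.1 h2.2
              ((hM d).1 hd).2.2
          · rw [ind_false h2, mul_zero]; positivity
        · rw [ind_false h1, zero_mul]; positivity
      calc k x ^ 2 ≤ _ := hsq
        _ ≤ ∑ c ∈ M', ∑ d ∈ M, (qi Q a x c d + qi Q u a c d + qi Q u a x c) :=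
          Finset.sum_le_sum fun c hc => Finset.sum_le_sum fun d hd => hle c hc d hd
        _ ≤ ∑ c ∈ M', ∑ d ∈ W, (qi Q a x c d + qi Q u a c d + qi Q u a x c) :=
          Finset.sum_le_sum fun c hc => Finset.sum_le_sum_of_subset_of_nonneg hMW
            fun d _ _ => by have n1 := hq0 a x c d
                            have n2 := hq0 u a c d
                            have n3 := hq0 u a x c
                            positivity
        _ ≤ ∑ c ∈ W, ∑ d ∈ W, (qi Q a x c d + qi Q u a c d + qi Q u a x c) :=
          Finset.sum_le_sum_of_subset_of_nonneg hM'W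
            fun c _ _ => Finset.sum_nonneg fun d _ => by
                            have n1 := hq0 a x c d
                            have n2 := hq0 u a c d
                            have n3 := hq0 u a x c
                            positivity
        _ = _ := by
          simp only [Finset.sum_add_distrib, Finset.sum_const, nsmul_eq_mul, Finset.mul_sum]
          rfl
    · have hle : k x ≤ ∑ c ∈ W, qi Q u a x c := by
        calc k x ≤ ∑ c ∈ M', qi Q u a x c := by
              refine Finset.sum_le_sum fun c hc => ?_
              by_cases h1 : G.Adj x c
              · rw [ind_true h1]
                by_cases hxu : x = u
                · subst hxu
                  exact absurd h1 ((hM c).1 (hM'M hc)).2.2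
                · have hxM : x ∈ M := (hM x).2 ⟨hxW, hxu, hux⟩
                  have hax : G.Adj a x := by
                    by_contra h
                    exact hxM' ((hM' x).2 ⟨hxM, h⟩)
                  rw [qi_one (hP u a x c ⟨hua, hax, h1, hux, ((hM c).1 (hM'M hc)).2.2,
                    ((hM' c).1 hc).2⟩) rfl]
              · rw [ind_false h1]; exact hq0 _ _ _ _
          _ ≤ _ := Finset.sum_le_sum_of_subset_of_nonneg hM'W fun _ _ _ => hq0 _ _ _ _
      have : k x ^ 2 ≤ m * ∑ c ∈ W, qi Q u a x c := by
        rw [sq]; exact mul_le_mul (hkm x) hle (hk0 x) hm0.le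
      linarith
  -- sum
  have hsum : ∑ x ∈ (W \ M') \ B, k x ^ 2 ≤ 3 * s ^ 2 * m ^ 3 := by
    calc _ ≤ ∑ x ∈ (W \ M') \ B, ((∑ c ∈ W, ∑ d ∈ W, qi Q a x c d)
      + (∑ c ∈ W, ∑ d ∈ W, qi Q u a c d) + m * ∑ c ∈ W, qi Q u a x c) :=
          Finset.sum_le_sum fun x hx => key x (Finset.mem_sdiff.1 hx).1 (Finset.mem_sdiff.1 hx).2
      _ ≤ ∑ x ∈ W, ((∑ c ∈ W, ∑ d ∈ W, qi Q a x c d)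
      + (∑ c ∈ W, ∑ d ∈ W, qi Q u a c d) + m * ∑ c ∈ W, qi Q u a x c) := by
          refine Finset.sum_le_sum_of_subset_of_nonneg
            (Finset.sdiff_subset.trans Finset.sdiff_subset) fun x _ _ => ?_
          have t1 : 0 ≤ (∑ c ∈ W, ∑ d ∈ W, qi Q a x c d) :=
            Finset.sum_nonneg fun _ _ => Finset.sum_nonneg fun _ _ => hq0 _ _ _ _
          have t2 : 0 ≤ (∑ c ∈ W, ∑ d ∈ W, qi Q u a c d) :=
            Finset.sum_nonneg fun _ _ => Finset.sum_nonneg fun _ _ => hq0 _ _ _ _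
          have t3 : 0 ≤ (∑ c ∈ W, qi Q u a x c) :=
            Finset.sum_nonneg fun _ _ => hq0 _ _ _ _
          positivity
      _ = (∑ x ∈ W, ∑ c ∈ W, ∑ d ∈ W, qi Q a x c d) + 2 * m * (∑ y ∈ W, ∑ z ∈ W, qi Q u a y z) := by
          rw [Finset.sum_add_distrib, Finset.sum_add_distrib, ← Finset.mul_sum,
            Finset.sum_const, nsmul_eq_mul]; ring
      _ ≤ s ^ 2 * m ^ 3 + 2 * m * (s ^ 2 * m ^ 2) := by gcongr
      _ = _ := by ring
  have hpt : ∀ x, k x ≤ k x ^ 2 / (2 * s * m) + s * m / 2 := by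
    intro x
    rw [div_add_div _ _ (by positivity) (by norm_num), le_div_iff₀ (by positivity)]
    nlinarith [sq_nonneg (k x - s * m)]
  have hgood : ∑ x ∈ (W \ M') \ B, k x ≤ 2 * s * m ^ 2 := by
    calc _ ≤ ∑ x ∈ (W \ M') \ B, (k x ^ 2 / (2 * s * m) + s * m / 2) :=
          Finset.sum_le_sum fun x _ => hpt x
      _ = (∑ x ∈ (W \ M') \ B, k x ^ 2) / (2 * s * m) + (((W \ M') \ B).card : ℝ) * (s * m / 2) := by
          rw [Finset.sum_add_distrib, Finset.sum_div, Finset.sum_const, nsmul_eq_mul]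
      _ ≤ (3 * s ^ 2 * m ^ 3) / (2 * s * m) + m * (s * m / 2) := by
          have : (((W \ M') \ B).card : ℝ) ≤ m := by
            rw [hm]; exact_mod_cast Finset.card_le_card (Finset.sdiff_subset.trans Finset.sdiff_subset)
          gcongr
      _ = _ := by field_simp; ring
  have hbad : ∑ x ∈ (W \ M') ∩ B, k x ≤ β * m ^ 2 := by
    calc _ ≤ ∑ x ∈ (W \ M') ∩ B, m := Finset.sum_le_sum fun x _ => hkm x
      _ = (((W \ M') ∩ B).card : ℝ) * m := by simp
      _ ≤ (β * m) * m := by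
        have : (((W \ M') ∩ B).card : ℝ) ≤ B.card := by
            exact_mod_cast Finset.card_le_card Finset.inter_subset_right
        gcongr; linarith
      _ = _ := by ring
  have : ec G (W \ M') M' = ∑ x ∈ (W \ M') ∩ B, k x + ∑ x ∈ (W \ M') \ B, k x :=
    (Finset.sum_inter_add_sum_sdiff _ _ _).symm
  rw [this]; linarith


lemma half {V : Type} [DecidableEq V] {G : SimpleGraph V} {Q : Finset V → Prop}
    (hP : ∀ w x y z, IsP4 G w x y z → Q {w, x, y, z}) (W B : Finset V) (u : V)
    (s β γ η : ℝ) (hs : 0 < s) (hη : 0 < η) (hγ : 0 < γ)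
    (hno : ∀ W1 W2 : Finset V, Disjoint W1 W2 → W1 ∪ W2 = W → W1.Nonempty → W2.Nonempty →
      η * W1.card * W2.card < ec G W1 W2)
    (hu : u ∈ W) (hdeg : η / 2 * W.card ≤ ∑ x ∈ W, ind (G.Adj u x))
    (hB : (B.card : ℝ) ≤ β * W.card) (hβ : β < η / 2)
    (hp2 : ∀ a ∈ W, a ∉ B → ∑ y ∈ W, ∑ z ∈ W, qi Q u a y z ≤ s ^ 2 * (W.card : ℝ) ^ 2)
    (hp3 : ∀ a ∈ W, a ∉ B → ∑ x ∈ W, ∑ y ∈ W, ∑ z ∈ W, qi Q a x y z ≤ s ^ 2 * (W.card : ℝ) ^ 3)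
    (hpar : 2 * s + β ≤ η * γ * (η / 2)) :
    ∃ a ∈ W, a ∉ B ∧ G.Adj u a ∧ ∃ M' : Finset V,
      (∀ x, x ∈ M' ↔ x ∈ W ∧ x ≠ u ∧ ¬ G.Adj u x ∧ ¬ G.Adj a x) ∧ (M'.card : ℝ) < γ * W.card := by
  classical
  have hm0 : (0 : ℝ) < W.card := by exact_mod_cast Finset.card_pos.2 ⟨u, hu⟩
  rw [sum_ind_eq] at hdeg
  have hne : ((W.filter (fun x => G.Adj u x)) \ B).Nonempty := by
    by_contra h
    rw [Finset.not_nonempty_iff_eq_empty, Finset.sdiff_eq_empty_iff_subset] at h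
    have h1 : ((W.filter (fun x => G.Adj u x)).card : ℝ) ≤ B.card := by
      exact_mod_cast Finset.card_le_card h
    nlinarith
  set M := W.filter (fun x => x ≠ u ∧ ¬ G.Adj u x) with hMdef
  obtain ⟨a, ha, hmax⟩ := Finset.exists_max_image _ (fun x => ∑ d ∈ M, ind (G.Adj x d)) hne
  simp only [Finset.mem_sdiff, Finset.mem_filter] at ha hmax
  obtain ⟨⟨haW, hua⟩, haB⟩ := ha
  refine ⟨a, haW, haB, hua, M.filter (fun x => ¬ G.Adj a x), ?_, ?_⟩
  · intro x; simp [hMdef]; tauto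
  set M' := M.filter (fun x => ¬ G.Adj a x) with hM'def
  by_contra hcon
  push Not at hcon
  have hA := subA hP W M M' B u a s β hs hua haW (fun x => by simp [hMdef])
    (fun x => by simp [hM'def]) (fun x hx hxB hux => hmax x ⟨⟨hx, hux⟩, hxB⟩) hB
    (hp2 a haW haB) (hp3 a haW haB)
  have hM'W : M' ⊆ W := (Finset.filter_subset _ _).trans (Finset.filter_subset _ _)
  have hsub : W.filter (fun x => G.Adj u x) ⊆ W \ M' := by
    intro x hx
    simp only [Finset.mem_filter] at hx
    simp only [hM'def, hMdef, Finset.mem_sdiff, Finset.mem_filter]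
    tauto
  have hc1 : η / 2 * W.card ≤ ((W \ M').card : ℝ) :=
    hdeg.trans (by exact_mod_cast Finset.card_le_card hsub)
  have hp := mul_pos hη hm0
  have n1 : (W \ M').Nonempty := by
    rw [← Finset.card_pos]
    have : (0 : ℝ) < ((W \ M').card : ℝ) := by linarith
    exact_mod_cast this
  have n2 : M'.Nonempty := by
    rw [← Finset.card_pos]
    have : (0 : ℝ) < (M'.card : ℝ) := by nlinarith [mul_pos hγ hm0]
    exact_mod_cast this
  have h1 := hno (W \ M') M' Finset.sdiff_disjoint (Finset.sdiff_union_of_subset hM'W) n1 n2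
  have h2 : η * (η / 2 * W.card) * (γ * W.card) ≤ η * ((W \ M').card : ℝ) * M'.card := by
    gcongr
  have h3 : (2 * s + β) * (W.card : ℝ) ^ 2 ≤ η * γ * (η / 2) * (W.card : ℝ) ^ 2 := by gcongr
  nlinarith

lemma ec_comm {V : Type} (G : SimpleGraph V) (A B : Finset V) : ec G A B = ec G B A := by
  unfold ec; rw [Finset.sum_comm]
  simp only [G.adj_comm]

lemma degl {V : Type} [DecidableEq V] {G : SimpleGraph V} (W : Finset V) (hW : 2 ≤ W.card)
    (η : ℝ) (hη : 0 < η)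
    (hno : ∀ W1 W2 : Finset V, Disjoint W1 W2 → W1 ∪ W2 = W → W1.Nonempty → W2.Nonempty →
      η * W1.card * W2.card < ec G W1 W2) (x : V) (hx : x ∈ W) :
    η / 2 * W.card ≤ ∑ y ∈ W, ind (G.Adj x y) := by
  have hc : (W.erase x).card = W.card - 1 := Finset.card_erase_of_mem hx
  have h := hno {x} (W.erase x) (by simp) (by ext y; simp; constructor
                                              · rintro (rfl | h)
                                                · exact hx
                                                · exact h.2
                                              · intro h; by_cases e : y = x <;> simp [e, h])
    (by simp) (by rw [← Finset.card_pos]; omega)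
  have h2 : ec G {x} (W.erase x) ≤ ∑ y ∈ W, ind (G.Adj x y) := by
    unfold ec
    rw [Finset.sum_singleton]
    exact Finset.sum_le_sum_of_subset_of_nonneg (Finset.erase_subset _ _) fun _ _ _ => ind_nonneg _
  have h3 : (W.card : ℝ) / 2 ≤ ((W.erase x).card : ℝ) := by
    rw [hc, Nat.cast_sub (by omega)]
    have : (2 : ℝ) ≤ W.card := by exact_mod_cast hW
    push_cast; linarith
  rw [Finset.card_singleton] at h
  push_cast at h
  nlinarith

set_option maxHeartbeats 1000000 in
lemma cut {V : Type} [DecidableEq V] {G : SimpleGraph V} {Q : Finset V → Prop}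
    (hP : ∀ w x y z, IsP4 G w x y z → Q {w, x, y, z}) (W : Finset V) (hW : 2 ≤ W.card)
    (η : ℝ) (hη : 0 < η) (hη1 : η < 1)
    (hQ : ∑ a ∈ W, ∑ b ∈ W, ∑ c ∈ W, ∑ d ∈ W, qi Q a b c d
      ≤ (η ^ 5 / 1000) ^ 4 * (W.card : ℝ) ^ 4) :
    ∃ W1 W2 : Finset V, Disjoint W1 W2 ∧ W1 ∪ W2 = W ∧ W1.Nonempty ∧ W2.Nonempty ∧
      (ec G W1 W2 ≤ η * W1.card * W2.card ∨ ec Gᶜ W1 W2 ≤ η * W1.card * W2.card) := by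
  classical
  by_contra hcon
  have hno1 : ∀ W1 W2 : Finset V, Disjoint W1 W2 → W1 ∪ W2 = W → W1.Nonempty → W2.Nonempty →
      η * W1.card * W2.card < ec G W1 W2 := by
    intro W1 W2 a b c d; by_contra h
    exact hcon ⟨W1, W2, a, b, c, d, Or.inl (not_lt.1 h)⟩
  have hno2 : ∀ W1 W2 : Finset V, Disjoint W1 W2 → W1 ∪ W2 = W → W1.Nonempty → W2.Nonempty →
      η * W1.card * W2.card < ec Gᶜ W1 W2 := by
    intro W1 W2 a b c d; by_contra h
    exact hcon ⟨W1, W2, a, b, c, d, Or.inr (not_lt.1 h)⟩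
  have hd1 := degl W hW η hη hno1
  have hd2 := degl W hW η hη hno2
  have hP2 : ∀ w x y z, IsP4 Gᶜ w x y z → Q {w, x, y, z} := by
    intro w x y z h
    have := hP _ _ _ _ h.of_compl
    have e : ({y, w, z, x} : Finset V) = {w, x, y, z} := by ext; simp; tauto
    rwa [e] at this
  have hq0 := qi_nonneg Q
  obtain ⟨s, hs⟩ : ∃ s, s = η ^ 5 / 1000 := ⟨_, rfl⟩
  have hs0 : 0 < s := by rw [hs]; positivity
  rw [← hs] at hQ
  set m : ℝ := (W.card : ℝ) with hm
  have hm0 : 0 < m := by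
    have : 0 < W.card := by omega
    rw [hm]; exact_mod_cast this
  have e2 : η ^ 2 ≤ η := by nlinarith
  have e3 : η ^ 3 ≤ η := by nlinarith [pow_pos hη 2]
  have e5 : η ^ 5 ≤ η ^ 3 := by
    have : η ^ 5 = η ^ 3 * η ^ 2 := by ring
    nlinarith [pow_pos hη 3]
  have hs2 : s ^ 2 ≤ s / 1000 := by
    have : s ≤ 1 / 1000 := by rw [hs]; linarith
    nlinarith
  have hs3 : s ^ 2 ≤ η * s / 1000 := by
    have : s ≤ η / 1000 := by rw [hs]; linarith
    nlinarith
  -- u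
  obtain ⟨u, hu, hpu⟩ : ∃ u ∈ W, ∑ b ∈ W, ∑ c ∈ W, ∑ d ∈ W, qi Q u b c d ≤ s ^ 4 * m ^ 3 := by
    by_contra h
    push Not at h
    have := Finset.sum_lt_sum_of_nonempty (Finset.card_pos.1 (by omega : 0 < W.card)) h
    rw [Finset.sum_const, nsmul_eq_mul, ← hm] at this
    nlinarith
  let B1 := W.filter (fun a => s ^ 2 * m ^ 3 < ∑ b ∈ W, ∑ c ∈ W, ∑ d ∈ W, qi Q a b c d)
  let B2 := W.filter (fun a => s ^ 2 * m ^ 2 < ∑ c ∈ W, ∑ d ∈ W, qi Q u a c d)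
  have hB1 : (B1.card : ℝ) ≤ s ^ 2 * m := by
    have h := markov W (fun a => ∑ b ∈ W, ∑ c ∈ W, ∑ d ∈ W, qi Q a b c d)
      (fun a _ => Finset.sum_nonneg fun _ _ => Finset.sum_nonneg fun _ _ =>
        Finset.sum_nonneg fun _ _ => hq0 _ _ _ _) (s ^ 2 * m ^ 3)
    have h2 : (B1.card : ℝ) * (s ^ 2 * m ^ 3) ≤ (s ^ 2 * m) * (s ^ 2 * m ^ 3) := by
      refine h.trans (hQ.trans (le_of_eq (by ring)))
    exact le_of_mul_le_mul_right h2 (by positivity)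
  have hB2 : (B2.card : ℝ) ≤ s ^ 2 * m := by
    have h := markov W (fun a => ∑ c ∈ W, ∑ d ∈ W, qi Q u a c d)
      (fun a _ => Finset.sum_nonneg fun _ _ =>
        Finset.sum_nonneg fun _ _ => hq0 _ _ _ _) (s ^ 2 * m ^ 2)
    have h2 : (B2.card : ℝ) * (s ^ 2 * m ^ 2) ≤ (s ^ 2 * m) * (s ^ 2 * m ^ 2) := by
      refine h.trans (hpu.trans (le_of_eq (by ring)))
    exact le_of_mul_le_mul_right h2 (by positivity)
  have hB12 : ((B1 ∪ B2).card : ℝ) ≤ 2 * s ^ 2 * m := by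
    have : ((B1 ∪ B2).card : ℝ) ≤ B1.card + B2.card := by exact_mod_cast Finset.card_union_le _ _
    linarith
  have g2 : ∀ a ∈ W, a ∉ B1 ∪ B2 → ∑ y ∈ W, ∑ z ∈ W, qi Q u a y z ≤ s ^ 2 * m ^ 2 := by
    intro a ha hb
    by_contra h
    exact hb (Finset.mem_union_right _ (Finset.mem_filter.2 ⟨ha, not_le.1 h⟩))
  have g3 : ∀ a ∈ W, a ∉ B1 ∪ B2 → ∑ x ∈ W, ∑ y ∈ W, ∑ z ∈ W, qi Q a x y z ≤ s ^ 2 * m ^ 3 := by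
    intro a ha hb
    by_contra h
    exact hb (Finset.mem_union_left _ (Finset.mem_filter.2 ⟨ha, not_le.1 h⟩))
  obtain ⟨a, haW, haB, hua, M', hM', hM'c⟩ := half hP W (B1 ∪ B2) u s (2 * s ^ 2) (η ^ 3 / 64) η
    hs0 hη (by positivity) hno1 hu (hd1 u hu) hB12 (by linarith) g2 g3 (by
      have : η * (η ^ 3 / 64) * (η / 2) = η ^ 5 / 128 := by ring
      rw [this]; linarith)
  let B3 := W.filter (fun b => η / 16 * m < ∑ d ∈ W, qi Q u a b d)
  have hB3 : (B3.card : ℝ) ≤ s * m / 60 := by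
    have h := markov W (fun b => ∑ d ∈ W, qi Q u a b d)
      (fun a _ => Finset.sum_nonneg fun _ _ => hq0 _ _ _ _) (η / 16 * m)
    have h2 : (B3.card : ℝ) * (η / 16 * m) ≤ (s * m / 60) * (η / 16 * m) := by
      refine h.trans ((g2 a haW haB).trans ?_)
      have : s * m / 60 * (η / 16 * m) = (η * s / 960) * m ^ 2 := by ring
      rw [this]
      have : s ^ 2 ≤ η * s / 960 := by nlinarith
      gcongr
    exact le_of_mul_le_mul_right h2 (by positivity)
  have hB4 : (((B1 ∪ B2) ∪ (B3 ∪ M')).card : ℝ) ≤ (s + η ^ 3 / 64) * m := by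
    have h1 : (((B1 ∪ B2) ∪ (B3 ∪ M')).card : ℝ) ≤ (B1 ∪ B2).card + (B3 ∪ M').card := by
      exact_mod_cast Finset.card_union_le _ _
    have h2 : ((B3 ∪ M').card : ℝ) ≤ B3.card + M'.card := by
      exact_mod_cast Finset.card_union_le _ _
    have : 2 * s ^ 2 * m ≤ 2 * (s / 1000) * m := by gcongr
    nlinarith [mul_pos hs0 hm0]
  have hsη : s ≤ η ^ 3 / 1000 := by rw [hs]; linarith
  obtain ⟨b, hbW, hbB, hub, N', hN', hN'c⟩ := half hP2 W ((B1 ∪ B2) ∪ (B3 ∪ M')) u s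
    (s + η ^ 3 / 64) (η / 8) η
    hs0 hη (by positivity) hno2 hu (hd2 u hu) hB4 (by linarith)
    (fun a ha h => g2 a ha fun h' => h (Finset.mem_union_left _ h'))
    (fun a ha h => g3 a ha fun h' => h (Finset.mem_union_left _ h')) (by
      have : η * (η / 8) * (η / 2) = η ^ 3 / 16 := by ring
      rw [this]; linarith)
  have hbM : b ∉ M' := fun h => hbB (by simp [h])
  have hb3 : ∑ d ∈ W, qi Q u a b d ≤ η / 16 * m := by
    by_contra h
    exact hbB (Finset.mem_union_right _ (Finset.mem_union_left _
      (Finset.mem_filter.2 ⟨hbW, not_le.1 h⟩)))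
  simp only [SimpleGraph.compl_adj] at hub hN'
  have hab : G.Adj a b := by
    by_contra h
    exact hbM ((hM' b).2 ⟨hbW, hub.1.symm, hub.2, h⟩)
  have hfin : ∑ x ∈ W, ind (Gᶜ.Adj a x) ≤ ∑ x ∈ W, (qi Q u a b x + ind (x ∈ M') + ind (x ∈ N')) := by
    refine Finset.sum_le_sum fun x hx => ?_
    have p1 := hq0 u a b x
    have p2 := ind_nonneg (x ∈ M')
    have p3 := ind_nonneg (x ∈ N')
    by_cases hax : Gᶜ.Adj a x
    · rw [ind_true hax]
      simp only [SimpleGraph.compl_adj] at hax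
      by_cases hM : x ∈ M'
      · rw [ind_true hM]; linarith
      by_cases hN : x ∈ N'
      · rw [ind_true hN]; linarith
      have hxu : x ≠ u := by rintro rfl; exact hax.2 hua.symm
      have hux : G.Adj u x := by
        by_contra h
        exact hM ((hM' x).2 ⟨hx, hxu, h, hax.2⟩)
      have hxb : x ≠ b := by rintro rfl; exact hax.2 hab
      have hbx : ¬ G.Adj b x := by
        intro h
        exact hN ((hN' x).2 ⟨hx, hxu, fun h' => h'.2 hux, fun h' => h'.2 h⟩)
      have := qi_one (a := u) (b := a) (c := b) (d := x)
        (hP x u a b ⟨hux.symm, hua, hab, fun h => hax.2 h.symm, fun h => hbx h.symm, hub.2⟩)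
        (by ext; simp; tauto)
      linarith
    · rw [ind_false hax]; positivity
  have hM2 : ∑ x ∈ W, ind (x ∈ M') ≤ M'.card := by
    rw [sum_ind_eq]; exact_mod_cast Finset.card_le_card fun x hx => (Finset.mem_filter.1 hx).2
  have hN2 : ∑ x ∈ W, ind (x ∈ N') ≤ N'.card := by
    rw [sum_ind_eq]; exact_mod_cast Finset.card_le_card fun x hx => (Finset.mem_filter.1 hx).2
  rw [Finset.sum_add_distrib, Finset.sum_add_distrib] at hfin
  have := hd2 a haW
  have h6 : η ^ 3 / 64 * m ≤ η / 64 * m := by gcongr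
  have := mul_pos hη hm0
  nlinarith


set_option linter.unusedSectionVars false
section graphpart
variable {V : Type} [DecidableEq V]

lemma ec_nonneg (G : SimpleGraph V) (A B : Finset V) : 0 ≤ ec G A B :=
  Finset.sum_nonneg fun _ _ => Finset.sum_nonneg fun _ _ => ind_nonneg _

lemma ec_mono (G : SimpleGraph V) {A A' B B' : Finset V} (h : A ⊆ A') (h' : B ⊆ B') :
    ec G A B ≤ ec G A' B' := by
  unfold ec
  calc _ ≤ ∑ a ∈ A, ∑ b ∈ B', ind (G.Adj a b) := Finset.sum_le_sum fun _ _ =>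
        Finset.sum_le_sum_of_subset_of_nonneg h' fun _ _ _ => ind_nonneg _
    _ ≤ _ := Finset.sum_le_sum_of_subset_of_nonneg h fun _ _ _ =>
        Finset.sum_nonneg fun _ _ => ind_nonneg _

lemma ec_le (G : SimpleGraph V) (A B : Finset V) : ec G A B ≤ A.card * B.card := by
  unfold ec
  calc _ ≤ ∑ a ∈ A, (B.card : ℝ) := Finset.sum_le_sum fun _ _ => sum_ind_le_card _ _
    _ = _ := by simp

lemma ec_union_left (G : SimpleGraph V) {A A' : Finset V} (B : Finset V) (h : Disjoint A A') :
    ec G (A ∪ A') B = ec G A B + ec G A' B := by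
  unfold ec; rw [Finset.sum_union h]

lemma ec_union_right (G : SimpleGraph V) {A A' : Finset V} (B : Finset V) (h : Disjoint A A') :
    ec G B (A ∪ A') = ec G B A + ec G B A' := by
  rw [ec_comm, ec_union_left G B h, ec_comm G A, ec_comm G A']

lemma ec_self (G : SimpleGraph V) {A B : Finset V} (h : Disjoint A B) :
    ec G (A ∪ B) (A ∪ B) = ec G A A + 2 * ec G A B + ec G B B := by
  rw [ec_union_left G _ h, ec_union_right G _ h, ec_union_right G _ h, ec_comm G B A]; ring

lemma cardu {A B : Finset V} (h : Disjoint A B) :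
    ((A ∪ B).card : ℝ) = A.card + B.card := by
  rw [Finset.card_union_of_disjoint h]; push_cast; rfl

lemma avg {G : SimpleGraph V} {C1 C2 : Finset V} (h : Disjoint C1 C2) {η D : ℝ}
    (hs : ec G C1 C2 ≤ η * C1.card * C2.card) (hη : 0 < η) (h1 : C1.Nonempty) (h2 : C2.Nonempty)
    (hD : D * ((C1 ∪ C2).card : ℝ) ≤ ec G (C1 ∪ C2) (C1 ∪ C2)) :
    (D - 2 * η * C2.card) * C1.card ≤ ec G C1 C1 ∨
    (D - 2 * η * C1.card) * C2.card ≤ ec G C2 C2 := by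
  by_contra hc
  push Not at hc
  rw [ec_self G h, cardu h] at hD
  have p1 : (0 : ℝ) < C1.card := by exact_mod_cast h1.card_pos
  have p2 : (0 : ℝ) < C2.card := by exact_mod_cast h2.card_pos
  have := mul_pos hη (mul_pos p1 p2)
  nlinarith

lemma avgd {G : SimpleGraph V} {C1 C2 : Finset V} (h : Disjoint C1 C2) {D : ℝ}
    (h1 : C2.card ≤ C1.card) (hD0 : 0 ≤ D)
    (hD : D * ((C1 ∪ C2).card : ℝ) ≤ ec G (C1 ∪ C2) (C1 ∪ C2)) :
    (D - 3 * C2.card) * C1.card ≤ ec G C1 C1 := by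
  rw [ec_self G h, cardu h] at hD
  have e1 := ec_le G C1 C2
  have e2 := ec_le G C2 C2
  have h1' : (C2.card : ℝ) ≤ C1.card := by exact_mod_cast h1
  have p2 : (0 : ℝ) ≤ C2.card := by positivity
  have := mul_nonneg hD0 p2
  nlinarith

structure Outer (G : SimpleGraph V) (W0 : Finset V) (n ξ η : ℝ) (X C S : Finset V) : Prop where
  un : X ∪ C ∪ S = W0
  dXC : Disjoint X C
  dXS : Disjoint X S
  dCS : Disjoint C S
  ne : C.Nonempty
  hX : ξ / 10 * n ≤ X.card
  hS : (S.card : ℝ) ≤ ξ / 10 * n + ξ / 200 * X.card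
  hXC : ec G X C ≤ η * X.card * n
  hC : (0.55 * ξ * n - 3 * S.card - 2 * η * X.card) * C.card ≤ ec G C C

structure InnerSt (G : SimpleGraph V) (n ξ η : ℝ) (X C0 S A B C : Finset V) : Prop where
  un : A ∪ B ∪ C = C0
  dAB : Disjoint A B
  dAC : Disjoint A C
  dBC : Disjoint B C
  ne : C.Nonempty
  hA : (A.card : ℝ) < ξ ^ 2 / 4000 * n
  hB : (B.card : ℝ) < ξ / 20 * n
  hAC : ec Gᶜ A C ≤ η * A.card * n
  hBC : ec G B C ≤ η * B.card * n
  hC : (0.55 * ξ * n - 3 * (S.card + A.card) - 2 * η * (X.card + B.card)) * C.card ≤ ec G C C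

structure Str (G : SimpleGraph V) (W0 : Finset V) (n ξ η : ℝ) (X Y Y1 Y2 Z1 Z2 : Finset V) :
    Prop where
  un : Y1 ∪ Y2 = Y
  sX : X ⊆ W0
  sY : Y ⊆ W0
  sZ1 : Z1 ⊆ W0
  sZ2 : Z2 ⊆ W0
  dXY : Disjoint X Y
  dXZ1 : Disjoint X Z1
  dXZ2 : Disjoint X Z2
  dYZ1 : Disjoint Y1 Z1
  dYZ2 : Disjoint Y2 Z2
  dYY : Disjoint Y1 Y2
  cZ1 : ξ ^ 2 / 4000 * n ≤ Z1.card
  cZ2 : ξ ^ 2 / 4000 * n ≤ Z2.card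
  eXY : ec G X Y ≤ η * n ^ 2
  eXZ1 : ec G X Z1 ≤ η * n ^ 2
  eXZ2 : ec G X Z2 ≤ η * n ^ 2
  eYZ1 : ec Gᶜ Y1 Z1 ≤ η * n ^ 2
  eYZ2 : ec Gᶜ Y2 Z2 ≤ η * n ^ 2
  eYY : ec Gᶜ Y1 Y2 ≤ η * n ^ 2
  cX : ξ / 10 * n ≤ X.card
  cY : ξ / 10 * n ≤ Y.card
  cS : ((W0 \ (X ∪ Y)).card : ℝ) ≤ 2 / 5 * ξ * n

def Cuts (G : SimpleGraph V) (W0 : Finset V) (n ξ η : ℝ) : Prop :=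
  ∀ C ⊆ W0, ξ / 5 * n ≤ C.card → ∃ C1 C2 : Finset V, Disjoint C1 C2 ∧ C1 ∪ C2 = C ∧
    C1.Nonempty ∧ C2.Nonempty ∧
      (ec G C1 C2 ≤ η * C1.card * C2.card ∨ ec Gᶜ C1 C2 ≤ η * C1.card * C2.card)

lemma card_le_of_sub {A B : Finset V} (h : A ⊆ B) : (A.card : ℝ) ≤ B.card := by
  exact_mod_cast Finset.card_le_card h

set_option maxHeartbeats 1000000 in
lemma inner_step (G : SimpleGraph V) (W0 : Finset V) (n ξ η : ℝ) (hn : 0 < n)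
    (hξ : 0 < ξ) (hξ1 : ξ < 1) (hη : 0 < η) (hηξ : η ≤ ξ / 100) (hW0 : (W0.card : ℝ) ≤ n)
    (hcut : Cuts G W0 n ξ η) (X C0 S : Finset V) (hO : Outer G W0 n ξ η X C0 S) :
    ∀ k : ℕ, ∀ A B C : Finset V, C.card = k → InnerSt G n ξ η X C0 S A B C →
      (∃ X' Y Y1 Y2 Z1 Z2, Str G W0 n ξ η X' Y Y1 Y2 Z1 Z2) ∨
      (∃ X' C' S', C'.card < C0.card ∧ Outer G W0 n ξ η X' C' S') := by
  intro k
  induction k using Nat.strong_induction_on with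
  | _ k ih =>
  intro A B C hk hI
  have hC0W : C0 ⊆ W0 := by rw [← hO.un]; intro x; simp; tauto
  have hXW : X ⊆ W0 := by rw [← hO.un]; intro x; simp; tauto
  have hAC0 : A ⊆ C0 := by rw [← hI.un]; intro x; simp; tauto
  have hBC0 : B ⊆ C0 := by rw [← hI.un]; intro x; simp; tauto
  have hCC0 : C ⊆ C0 := by rw [← hI.un]; intro x; simp; tauto
  have hXB : (X.card : ℝ) + B.card ≤ n := by
    rw [← cardu (hO.dXC.mono_right hBC0)]
    exact (card_le_of_sub (Finset.union_subset hXW (hBC0.trans hC0W))).trans hW0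
  have hX0 : (0 : ℝ) ≤ X.card := by positivity
  have hB0 : (0 : ℝ) ≤ B.card := by positivity
  have hA0 : (0 : ℝ) ≤ A.card := by positivity
  have hXn : (X.card : ℝ) ≤ n := by linarith
  have hξn : 0 < ξ * n := mul_pos hξ hn
  have hκ : ξ / 200 * X.card ≤ ξ * n / 200 := by nlinarith
  have hγ : ξ ^ 2 / 4000 * n ≤ ξ * n / 4000 := by nlinarith
  have hηn : η * (X.card + B.card) ≤ ξ * n / 100 := by
    calc η * ((X.card : ℝ) + B.card) ≤ ξ / 100 * n := by gcongr
      _ = _ := by ring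
  have hSS := hO.hS
  have hAA := hI.hA
  have hBB := hI.hB
  have hDlow : ξ / 5 * n ≤ 0.55 * ξ * n - 3 * (S.card + A.card) - 2 * η * (X.card + B.card) := by
    nlinarith
  have hCpos : (0 : ℝ) < C.card := by exact_mod_cast hI.ne.card_pos
  have hClow : ξ / 5 * n ≤ C.card := by
    have h1 := hI.hC.trans (ec_le G C C)
    exact hDlow.trans (le_of_mul_le_mul_right h1 hCpos)
  obtain ⟨C1, C2, hd, hu, n1, n2, hcase⟩ := hcut C (hCC0.trans hC0W) hClow
  have hCn : (C.card : ℝ) ≤ n := (card_le_of_sub (hCC0.trans hC0W)).trans hW0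
  rcases hcase with hsp | hde
  · -- sparse
    have main : ∀ C1 C2 : Finset V, Disjoint C1 C2 → C1 ∪ C2 = C → C1.Nonempty → C2.Nonempty →
        ec G C2 C1 ≤ η * C2.card * C1.card →
        ((0.55 * ξ * n - 3 * (S.card + A.card) - 2 * η * (X.card + B.card)) - 2 * η * C2.card)
          * C1.card ≤ ec G C1 C1 →
        (∃ X' Y Y1 Y2 Z1 Z2, Str G W0 n ξ η X' Y Y1 Y2 Z1 Z2) ∨
        (∃ X' C' S', C'.card < C0.card ∧ Outer G W0 n ξ η X' C' S') := by
      intro C1 C2 hd hu n1 n2 hsp hav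
      have hC1 : C1 ⊆ C := by rw [← hu]; exact Finset.subset_union_left
      have hC2 : C2 ⊆ C := by rw [← hu]; exact Finset.subset_union_right
      have hC1c : C1.card < C.card := by
        rw [← hu, Finset.card_union_of_disjoint hd]; have := n2.card_pos; omega
      have hC1n : (C1.card : ℝ) ≤ n := (card_le_of_sub hC1).trans hCn
      have dBC2 : Disjoint B C2 := hI.dBC.mono_right hC2
      have hcu := cardu dBC2
      have hsp2 : ec G C2 C1 ≤ η * C2.card * n := by
        refine hsp.trans ?_
        gcongr
      have hBC1 : ec G B C1 ≤ η * B.card * n := (ec_mono G subset_rfl hC1).trans hI.hBC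
      by_cases hsm : ((B ∪ C2).card : ℝ) < ξ / 20 * n
      · refine ih C1.card (hk ▸ hC1c) A (B ∪ C2) C1 rfl ?_
        refine ⟨?_, ?_, hI.dAC.mono_right hC1, ?_, n1, hI.hA, hsm,
          (ec_mono _ subset_rfl hC1).trans hI.hAC, ?_, ?_⟩
        · rw [← hI.un, ← hu]; ext x; simp; tauto
        · rw [Finset.disjoint_union_right]; exact ⟨hI.dAB, hI.dAC.mono_right hC2⟩
        · rw [Finset.disjoint_union_left]; exact ⟨hI.dBC.mono_right hC1, hd.symm⟩
        · rw [ec_union_left _ _ dBC2, hcu]; linarith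
        · rw [hcu]; refine le_trans (le_of_eq ?_) hav; ring
      · right
        push Not at hsm
        have hBCC0 : B ∪ C2 ⊆ C0 := Finset.union_subset hBC0 (hC2.trans hCC0)
        have dX : Disjoint X (B ∪ C2) := hO.dXC.mono_right hBCC0
        have hcX : ((X ∪ (B ∪ C2)).card : ℝ) = X.card + (B.card + C2.card) := by
          rw [cardu dX, hcu]
        have dSA : Disjoint S A := (hO.dCS.mono_left hAC0).symm
        refine ⟨X ∪ (B ∪ C2), C1, S ∪ A,
          lt_of_lt_of_le hC1c (Finset.card_le_card hCC0), ?_⟩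
        refine ⟨?_, ?_, ?_, ?_, n1, ?_, ?_, ?_, ?_⟩
        · rw [← hO.un, ← hI.un, ← hu]; ext x; simp; tauto
        · rw [Finset.disjoint_union_left, Finset.disjoint_union_left]
          exact ⟨hO.dXC.mono_right (hC1.trans hCC0), hI.dBC.mono_right hC1, hd.symm⟩
        · simp only [Finset.disjoint_union_left, Finset.disjoint_union_right]
          exact ⟨⟨hO.dXS, hO.dCS.mono_left hBC0, hO.dCS.mono_left (hC2.trans hCC0)⟩,
            hO.dXC.mono_right hAC0, hI.dAB.symm, (hI.dAC.mono_right hC2).symm⟩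
        · simp only [Finset.disjoint_union_right]
          exact ⟨hO.dCS.mono_left (hC1.trans hCC0), (hI.dAC.mono_right hC1).symm⟩
        · rw [hcX]; have := hO.hX; rw [hcu] at hsm
          have : (0 : ℝ) ≤ C2.card := by positivity
          linarith
        · rw [cardu dSA, hcX]; rw [hcu] at hsm
          have h9 : ξ ^ 2 / 4000 * n ≤ ξ / 200 * (B.card + C2.card) := by
            calc ξ ^ 2 / 4000 * n = ξ / 200 * (ξ / 20 * n) := by ring
              _ ≤ _ := by gcongr
          linarith
        · rw [ec_union_left _ _ dX, ec_union_left _ _ dBC2, hcX]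
          have := (ec_mono G (subset_refl X) (hC1.trans hCC0)).trans hO.hXC
          linarith
        · rw [cardu dSA, hcX]; refine le_trans (le_of_eq ?_) hav; ring
    rcases avg hd hsp hη n1 n2 (by rw [hu]; exact hI.hC) with h | h
    · exact main C1 C2 hd hu n1 n2 (by rw [ec_comm]; linarith) h
    · exact main C2 C1 hd.symm (by rw [Finset.union_comm, hu]) n2 n1 hsp h
  · -- dense
    have main : ∀ C1 C2 : Finset V, Disjoint C1 C2 → C1 ∪ C2 = C → C1.Nonempty → C2.Nonempty →
        ec Gᶜ C2 C1 ≤ η * C2.card * C1.card → C2.card ≤ C1.card →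
        (∃ X' Y Y1 Y2 Z1 Z2, Str G W0 n ξ η X' Y Y1 Y2 Z1 Z2) ∨
        (∃ X' C' S', C'.card < C0.card ∧ Outer G W0 n ξ η X' C' S') := by
      intro C1 C2 hd hu n1 n2 hde hle
      have hC1 : C1 ⊆ C := by rw [← hu]; exact Finset.subset_union_left
      have hC2 : C2 ⊆ C := by rw [← hu]; exact Finset.subset_union_right
      have hC1c : C1.card < C.card := by
        rw [← hu, Finset.card_union_of_disjoint hd]; have := n2.card_pos; omega
      have hC1n : (C1.card : ℝ) ≤ n := (card_le_of_sub hC1).trans hCn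
      have hC2n : (C2.card : ℝ) ≤ n := (card_le_of_sub hC2).trans hCn
      have hav := avgd hd hle (le_trans (by positivity) hDlow) (by rw [hu]; exact hI.hC)
      have dAC2 : Disjoint A C2 := hI.dAC.mono_right hC2
      have hcu := cardu dAC2
      have hde2 : ec Gᶜ C2 C1 ≤ η * C2.card * n := by
        refine hde.trans ?_
        gcongr
      have hAC1 : ec Gᶜ A C1 ≤ η * A.card * n := (ec_mono _ subset_rfl hC1).trans hI.hAC
      have hACC1 : ec Gᶜ (A ∪ C2) C1 ≤ η * ((A ∪ C2).card : ℝ) * n := by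
        rw [ec_union_left _ _ dAC2, hcu]; linarith
      by_cases hsm : ((A ∪ C2).card : ℝ) < ξ ^ 2 / 4000 * n
      · refine ih C1.card (hk ▸ hC1c) (A ∪ C2) B C1 rfl ?_
        refine ⟨?_, ?_, ?_, hI.dBC.mono_right hC1, n1, hsm, hI.hB, hACC1,
          (ec_mono _ subset_rfl hC1).trans hI.hBC, ?_⟩
        · rw [← hI.un, ← hu]; ext x; simp; tauto
        · rw [Finset.disjoint_union_left]; exact ⟨hI.dAB, hI.dBC.symm.mono_left hC2⟩
        · rw [Finset.disjoint_union_left]; exact ⟨hI.dAC.mono_right hC1, hd.symm⟩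
        · rw [hcu]; refine le_trans (le_of_eq ?_) hav; ring
      · left
        push Not at hsm
        have hXC0 : ∀ T ⊆ C0, ec G X T ≤ η * n ^ 2 := by
          intro T hT
          refine ((ec_mono G subset_rfl hT).trans hO.hXC).trans ?_
          have : η * X.card * n ≤ η * n * n := by gcongr
          linarith
        have hηn0 : 0 ≤ η * n ^ 2 := by positivity
        have hC1C0 := hC1.trans hCC0
        have hC2C0 := hC2.trans hCC0
        have hcC := cardu hd
        rw [hu] at hcC
        have hle' : (C2.card : ℝ) ≤ C1.card := by exact_mod_cast hle
        have hACC0 : A ∪ C2 ⊆ C0 := Finset.union_subset hAC0 hC2C0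
        by_cases hbig : (C2.card : ℝ) < ξ ^ 2 / 4000 * n
        · refine ⟨X, C1, C1, ∅, A ∪ C2, A ∪ C2, ?_⟩
          have dd : Disjoint C1 (A ∪ C2) := by
            rw [Finset.disjoint_union_right]; exact ⟨(hI.dAC.mono_right hC1).symm, hd⟩
          refine ⟨by simp, hXW, hC1C0.trans hC0W, hACC0.trans hC0W, hACC0.trans hC0W,
            hO.dXC.mono_right hC1C0, hO.dXC.mono_right hACC0, hO.dXC.mono_right hACC0, dd,
            by simp, by simp, hsm, hsm, hXC0 _ hC1C0, hXC0 _ hACC0, hXC0 _ hACC0, ?_,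
            by simpa [ec] using hηn0, by simpa [ec] using hηn0, hO.hX, by linarith, ?_⟩
          · rw [ec_comm]; refine hACC1.trans ?_
            have : ((A ∪ C2).card : ℝ) ≤ n := (card_le_of_sub (hACC0.trans hC0W)).trans hW0
            have : η * ((A ∪ C2).card : ℝ) * n ≤ η * n * n := by gcongr
            linarith
          · have hs : W0 \ (X ∪ C1) ⊆ S ∪ (A ∪ (C2 ∪ B)) := by
              intro x; rw [← hO.un, ← hI.un, ← hu]; simp; tauto
            have h1 := card_le_of_sub hs
            have h2 : ((S ∪ (A ∪ (C2 ∪ B))).card : ℝ) ≤ S.card + (A ∪ (C2 ∪ B)).card := by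
              exact_mod_cast Finset.card_union_le _ _
            have h3 : ((A ∪ (C2 ∪ B)).card : ℝ) ≤ A.card + (C2 ∪ B).card := by
              exact_mod_cast Finset.card_union_le _ _
            have h4 : ((C2 ∪ B).card : ℝ) ≤ C2.card + B.card := by
              exact_mod_cast Finset.card_union_le _ _
            linarith
        · push Not at hbig
          have hde3 : ec Gᶜ C2 C1 ≤ η * n ^ 2 := by
            have : η * C2.card * n ≤ η * n * n := by gcongr
            linarith
          refine ⟨X, C, C1, C2, C2, C1, ?_⟩
          refine ⟨hu, hXW, hCC0.trans hC0W, hC2C0.trans hC0W, hC1C0.trans hC0W,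
            hO.dXC.mono_right hCC0, hO.dXC.mono_right hC2C0, hO.dXC.mono_right hC1C0, hd,
            hd.symm, hd, hbig, hbig.trans hle', hXC0 _ hCC0, hXC0 _ hC2C0, hXC0 _ hC1C0,
            by rw [ec_comm]; exact hde3, hde3, by rw [ec_comm]; exact hde3, hO.hX, by linarith, ?_⟩
          have hs : W0 \ (X ∪ C) ⊆ S ∪ (A ∪ B) := by
            intro x; rw [← hO.un, ← hI.un]; simp; tauto
          have h1 := card_le_of_sub hs
          have h2 : ((S ∪ (A ∪ B)).card : ℝ) ≤ S.card + (A ∪ B).card := by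
            exact_mod_cast Finset.card_union_le _ _
          have h3 : ((A ∪ B).card : ℝ) ≤ A.card + B.card := by
            exact_mod_cast Finset.card_union_le _ _
          linarith
    rcases le_total C2.card C1.card with h | h
    · exact main C1 C2 hd hu n1 n2 (by rw [ec_comm]; linarith) h
    · exact main C2 C1 hd.symm (by rw [Finset.union_comm, hu]) n2 n1 hde h

lemma outer_str (G : SimpleGraph V) (W0 : Finset V) (n ξ η : ℝ) (hn : 0 < n)
    (hξ : 0 < ξ) (hξ1 : ξ < 1) (hη : 0 < η) (hηξ : η ≤ ξ / 100) (hW0 : (W0.card : ℝ) ≤ n)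
    (hcut : Cuts G W0 n ξ η) :
    ∀ k : ℕ, ∀ X C S : Finset V, C.card = k → Outer G W0 n ξ η X C S →
      ∃ X' Y Y1 Y2 Z1 Z2, Str G W0 n ξ η X' Y Y1 Y2 Z1 Z2 := by
  intro k
  induction k using Nat.strong_induction_on with
  | _ k ih =>
  intro X C S hk hO
  rcases inner_step G W0 n ξ η hn hξ hξ1 hη hηξ hW0 hcut X C S hO C.card ∅ ∅ C rfl (by
    refine ⟨by simp, by simp, by simp, by simp, hO.ne, ?_, ?_, by simp [ec], by simp [ec], ?_⟩
    · simp; positivity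
    · simp; positivity
    · simpa using hO.hC) with h | ⟨X', C', S', h1, h2⟩
  · exact h
  · exact ih C'.card (hk ▸ h1) X' C' S' rfl h2

structure P1 (G : SimpleGraph V) (W0 : Finset V) (n ξ η : ℝ) (A B C : Finset V) : Prop where
  un : A ∪ B ∪ C = W0
  dAB : Disjoint A B
  dAC : Disjoint A C
  dBC : Disjoint B C
  hA : (A.card : ℝ) < ξ / 10 * n
  hB : (B.card : ℝ) < ξ / 10 * n
  hAC : ec Gᶜ A C ≤ η * A.card * n
  hBC : ec G B C ≤ η * B.card * n

lemma P1.symm {G : SimpleGraph V} {W0 : Finset V} {n ξ η : ℝ} {A B C : Finset V}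
    (h : P1 G W0 n ξ η A B C) : P1 Gᶜ W0 n ξ η B A C :=
  ⟨by rw [Finset.union_comm B A]; exact h.un, h.dAB.symm, h.dBC, h.dAC, h.hB, h.hA,
    by rw [compl_compl]; exact h.hBC, h.hAC⟩

lemma p1_step (G : SimpleGraph V) (W0 : Finset V) (n ξ η : ℝ) (hn : 0 < n)
    (hη : 0 < η) (hW0 : (W0.card : ℝ) ≤ n)
    (hden : 0.95 * ξ * n ^ 2 ≤ ec G W0 W0) (hξ : 0 < ξ)
    (A B C : Finset V) (h : P1 G W0 n ξ η A B C) (C1 C2 : Finset V) (hd : Disjoint C1 C2)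
    (hu : C1 ∪ C2 = C) (n1 : C1.Nonempty) (n2 : C2.Nonempty)
    (hsp : ec G C1 C2 ≤ η * C1.card * C2.card) :
    (∃ A B C', C'.card < C.card ∧ P1 G W0 n ξ η A B C') ∨ (∃ X C S, Outer G W0 n ξ η X C S) := by
  have hCW : C ⊆ W0 := by rw [← h.un]; exact Finset.subset_union_right
  have hCn : (C.card : ℝ) ≤ n := (card_le_of_sub hCW).trans hW0
  have hξn := mul_pos hξ hn
  have dR : Disjoint (A ∪ B) C := by
    rw [Finset.disjoint_union_left]; exact ⟨h.dAC, h.dBC⟩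
  have hR := cardu h.dAB
  have hA := h.hA
  have hB := h.hB
  have hCC : 0.55 * ξ * n * C.card ≤ ec G C C := by
    have h1 := ec_self G dR
    rw [h.un] at h1
    have h2 := ec_le G (A ∪ B) C
    have h3 := ec_le G (A ∪ B) (A ∪ B)
    have h4 : ec G (A ∪ B) C + ec G (A ∪ B) (A ∪ B) ≤ ((A ∪ B).card : ℝ) * n := by
      have : (((A ∪ B) ∪ C).card : ℝ) = (A ∪ B).card + C.card := cardu dR
      rw [h.un] at this
      have : ((A ∪ B).card : ℝ) * ((A ∪ B).card + C.card) ≤ (A ∪ B).card * n := by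
        gcongr; linarith
      linarith
    have h5 : ec G (A ∪ B) C ≤ ((A ∪ B).card : ℝ) * n := by
      linarith [ec_nonneg G (A ∪ B) (A ∪ B)]
    have h6 : ((A ∪ B).card : ℝ) * n ≤ (ξ / 5 * n) * n := by gcongr; linarith
    have h7 : 0.55 * ξ * n * C.card ≤ 0.55 * ξ * n * n := by gcongr
    nlinarith
  have main : ∀ C1 C2 : Finset V, Disjoint C1 C2 → C1 ∪ C2 = C → C1.Nonempty → C2.Nonempty →
        ec G C2 C1 ≤ η * C2.card * C1.card →
        (0.55 * ξ * n - 2 * η * C2.card) * C1.card ≤ ec G C1 C1 →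
        (∃ A B C', C'.card < C.card ∧ P1 G W0 n ξ η A B C') ∨
        (∃ X C S, Outer G W0 n ξ η X C S) := by
    intro C1 C2 hd hu n1 n2 hsp hav
    have hC1 : C1 ⊆ C := by rw [← hu]; exact Finset.subset_union_left
    have hC2 : C2 ⊆ C := by rw [← hu]; exact Finset.subset_union_right
    have hC1c : C1.card < C.card := by
      rw [← hu, Finset.card_union_of_disjoint hd]; have := n2.card_pos; omega
    have hC1n : (C1.card : ℝ) ≤ n := (card_le_of_sub hC1).trans hCn
    have dBC2 : Disjoint B C2 := h.dBC.mono_right hC2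
    have hcu := cardu dBC2
    have hsp2 : ec G C2 C1 ≤ η * C2.card * n := by
      refine hsp.trans ?_
      gcongr
    have hBC1 : ec G (B ∪ C2) C1 ≤ η * ((B ∪ C2).card : ℝ) * n := by
      rw [ec_union_left _ _ dBC2, hcu]
      have : ec G B C1 ≤ η * B.card * n := (ec_mono G subset_rfl hC1).trans h.hBC
      linarith
    have dd : Disjoint (B ∪ C2) C1 := by
      rw [Finset.disjoint_union_left]; exact ⟨h.dBC.mono_right hC1, hd.symm⟩
    have da : Disjoint A (B ∪ C2) := by
      rw [Finset.disjoint_union_right]; exact ⟨h.dAB, h.dAC.mono_right hC2⟩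
    by_cases hsm : ((B ∪ C2).card : ℝ) < ξ / 10 * n
    · left
      refine ⟨A, B ∪ C2, C1, hC1c, ?_, da, h.dAC.mono_right hC1, dd, h.hA, hsm,
        (ec_mono _ subset_rfl hC1).trans h.hAC, hBC1⟩
      rw [← h.un, ← hu]; ext x; simp; tauto
    · right
      push Not at hsm
      refine ⟨B ∪ C2, C1, A, ?_, dd, da.symm, (h.dAC.mono_right hC1).symm, n1, hsm, ?_, hBC1, ?_⟩
      · rw [← h.un, ← hu]; ext x; simp; tauto
      · have : 0 ≤ ξ / 200 * ((B ∪ C2).card : ℝ) := by positivity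
        linarith
      · refine le_trans ?_ hav
        rw [hcu]
        have p1 : 0 ≤ η * B.card := by positivity
        have p2 : (0 : ℝ) ≤ A.card := by positivity
        gcongr ?_ * _
        linarith
  rcases avg hd hsp hη n1 n2 (by rw [hu]; exact hCC) with h | h
  · exact main C1 C2 hd hu n1 n2 (by rw [ec_comm]; linarith) h
  · exact main C2 C1 hd.symm (by rw [Finset.union_comm, hu]) n2 n1 hsp h

lemma p1_outer (G : SimpleGraph V) (W0 : Finset V) (n ξ η : ℝ) (hn : 0 < n)
    (hξ : 0 < ξ) (hξ1 : ξ < 1) (hη : 0 < η) (hW0 : (W0.card : ℝ) ≤ n)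
    (hW0' : 1 / 2 * n ≤ W0.card)
    (hden : 0.95 * ξ * n ^ 2 ≤ ec G W0 W0) (hden' : 0.95 * ξ * n ^ 2 ≤ ec Gᶜ W0 W0)
    (hcut : Cuts G W0 n ξ η) :
    ∀ k : ℕ, ∀ A B C : Finset V, C.card = k → P1 G W0 n ξ η A B C →
      (∃ X C S, Outer G W0 n ξ η X C S) ∨ (∃ X C S, Outer Gᶜ W0 n ξ η X C S) := by
  intro k
  induction k using Nat.strong_induction_on with
  | _ k ih =>
  intro A B C hk h
  have hCW : C ⊆ W0 := by rw [← h.un]; exact Finset.subset_union_right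
  have hξn := mul_pos hξ hn
  have hCl : ξ / 5 * n ≤ C.card := by
    have dR : Disjoint (A ∪ B) C := by
      rw [Finset.disjoint_union_left]; exact ⟨h.dAC, h.dBC⟩
    have h1 := cardu h.dAB
    have h2 := cardu dR
    rw [h.un] at h2
    have := h.hA
    have := h.hB
    have : ξ * n ≤ 1 * n := by gcongr
    -- |C| ≥ n/2 - ξ/5 n
    linarith
  obtain ⟨C1, C2, hd, hu, n1, n2, hcase⟩ := hcut C hCW hCl
  rcases hcase with hc | hc
  · rcases p1_step G W0 n ξ η hn hη hW0 hden hξ A B C h C1 C2 hd hu n1 n2 hc with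
      ⟨A', B', C', h1, h2⟩ | h1
    · exact ih C'.card (hk ▸ h1) A' B' C' rfl h2
    · exact Or.inl h1
  · rcases p1_step Gᶜ W0 n ξ η hn hη hW0 hden' hξ B A C h.symm C1 C2 hd hu n1 n2 hc with
      ⟨A', B', C', h1, h2⟩ | h1
    · have h3 := h2.symm
      rw [compl_compl] at h3
      exact ih C'.card (hk ▸ h1) B' A' C' rfl h3
    · exact Or.inr h1

lemma graph_main {G : SimpleGraph V} {Q : Finset V → Prop}
    (hP : ∀ w x y z, IsP4 G w x y z → Q {w, x, y, z})
    (W0 : Finset V) (n ξ η : ℝ) (hn : 100 ≤ ξ * n)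
    (hξ : 0 < ξ) (hξ1 : ξ < 1) (hη : 0 < η) (hηξ : η ≤ ξ / 100) (hW0 : (W0.card : ℝ) ≤ n)
    (hW0' : 1 / 2 * n ≤ W0.card)
    (hden : 0.95 * ξ * n ^ 2 ≤ ec G W0 W0) (hden' : 0.95 * ξ * n ^ 2 ≤ ec Gᶜ W0 W0)
    (hQ : ∑ a ∈ W0, ∑ b ∈ W0, ∑ c ∈ W0, ∑ d ∈ W0, qi Q a b c d
      ≤ (η ^ 5 / 1000) ^ 4 * (ξ / 5 * n) ^ 4) :
    (∃ X Y Y1 Y2 Z1 Z2, Str G W0 n ξ η X Y Y1 Y2 Z1 Z2) ∨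
    (∃ X Y Y1 Y2 Z1 Z2, Str Gᶜ W0 n ξ η X Y Y1 Y2 Z1 Z2) := by
  have hn0 : 0 < n := by
    by_contra h
    push Not at h
    nlinarith
  have hcut : Cuts G W0 n ξ η := by
    intro C hC hCl
    refine cut hP C ?_ η hη (by linarith) ?_
    · have : (2 : ℝ) ≤ C.card := by linarith
      exact_mod_cast this
    · refine le_trans ?_ (hQ.trans ?_)
      · have q0 := qi_nonneg Q
        calc _ ≤ ∑ a ∈ C, ∑ b ∈ W0, ∑ c ∈ W0, ∑ d ∈ W0, qi Q a b c d := by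
              refine Finset.sum_le_sum fun a _ => ?_
              calc _ ≤ ∑ b ∈ C, ∑ c ∈ W0, ∑ d ∈ W0, qi Q a b c d := by
                    refine Finset.sum_le_sum fun b _ => ?_
                    calc _ ≤ ∑ c ∈ C, ∑ d ∈ W0, qi Q a b c d := by
                          refine Finset.sum_le_sum fun c _ => ?_
                          exact Finset.sum_le_sum_of_subset_of_nonneg hC fun _ _ _ => q0 _ _ _ _
                      _ ≤ _ := Finset.sum_le_sum_of_subset_of_nonneg hC fun _ _ _ =>
                            Finset.sum_nonneg fun _ _ => q0 _ _ _ _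
                _ ≤ _ := Finset.sum_le_sum_of_subset_of_nonneg hC fun _ _ _ =>
                            Finset.sum_nonneg fun _ _ => Finset.sum_nonneg fun _ _ => q0 _ _ _ _
          _ ≤ _ := Finset.sum_le_sum_of_subset_of_nonneg hC fun _ _ _ =>
                    Finset.sum_nonneg fun _ _ => Finset.sum_nonneg fun _ _ =>
                      Finset.sum_nonneg fun _ _ => q0 _ _ _ _
      · gcongr
  have hcut' : Cuts Gᶜ W0 n ξ η := by
    intro C hC hCl
    obtain ⟨C1, C2, a, b, c, d, e⟩ := hcut C hC hCl
    refine ⟨C1, C2, a, b, c, d, ?_⟩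
    rw [compl_compl]; exact e.symm
  have hstart : P1 G W0 n ξ η ∅ ∅ W0 := by
    refine ⟨by simp, by simp, by simp, by simp, ?_, ?_, by simp [ec], by simp [ec]⟩
    · simp; positivity
    · simp; positivity
  rcases p1_outer G W0 n ξ η hn0 hξ hξ1 hη hW0 hW0' hden hden' hcut _ _ _ _ rfl hstart with
    ⟨X, C, S, h⟩ | ⟨X, C, S, h⟩
  · exact Or.inl (outer_str G W0 n ξ η hn0 hξ hξ1 hη hηξ hW0 hcut _ _ _ _ rfl h)
  · exact Or.inr (outer_str Gᶜ W0 n ξ η hn0 hξ hξ1 hη hηξ hW0 hcut' _ _ _ _ rfl h)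

end graphpart

section hyper
variable {V : Type} [DecidableEq V]

def isD2 (E : Finset (Finset V)) (S : Finset V) : Prop :=
  S.card = 4 ∧ (E.filter (fun e => e ⊆ S)).card = 2

def QQ (E : Finset (Finset V)) (v : V) (S : Finset V) : Prop :=
  isD2 E S ∨ ∃ w ∈ S, S.card = 4 ∧ isD2 E (insert v (S.erase w))

def lk (E : Finset (Finset V)) (v : V) : SimpleGraph V where
  Adj x y := x ≠ y ∧ {v, x, y} ∈ E
  symm := ⟨fun x y h => ⟨h.1.symm, by rw [Finset.pair_comm y x]; exact h.2⟩⟩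
  loopless := ⟨fun x h => h.1 rfl⟩

lemma card3 {a b c : V} (h : ({a, b, c} : Finset V).card = 3) : a ≠ b ∧ a ≠ c ∧ b ≠ c := by
  rw [Finset.card_eq_three] at h
  obtain ⟨x, y, z, h1, h2, h3, h4⟩ := h
  have hc : ({a, b, c} : Finset V).card = 3 := by rw [h4]; simp [h1, h2, h3]
  refine ⟨?_, ?_, ?_⟩
  · rintro rfl
    have : ({a, a, c} : Finset V).card ≤ 2 := by simpa using Finset.card_le_two
    omega
  · rintro rfl
    have e : ({a, b, a} : Finset V) = {a, b} := by ext; simp; tauto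
    rw [e] at hc
    have := Finset.card_le_two (a := a) (b := b)
    omega
  · rintro rfl
    have e : ({a, b, b} : Finset V) = {a, b} := by ext; simp
    rw [e] at hc
    have := Finset.card_le_two (a := a) (b := b)
    omega

lemma count4 {E : Finset (Finset V)} (hE : ∀ e ∈ E, e.card = 3) {a b c d : V}
    (hab : a ≠ b) (hac : a ≠ c) (had : a ≠ d) (hbc : b ≠ c) (hbd : b ≠ d) (hcd : c ≠ d) :
    (E.filter (fun e => e ⊆ {a, b, c, d})).card =
      (if {a, b, c} ∈ E then 1 else 0) + ((if {a, b, d} ∈ E then 1 else 0) +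
      ((if {a, c, d} ∈ E then 1 else 0) + (if {b, c, d} ∈ E then 1 else 0))) := by
  have h1 : E.filter (fun e => e ⊆ {a, b, c, d}) =
      ({{a, b, c}, {a, b, d}, {a, c, d}, {b, c, d}} : Finset (Finset V)).filter (· ∈ E) := by
    ext e
    simp only [Finset.mem_filter, Finset.mem_insert, Finset.mem_singleton]
    constructor
    · rintro ⟨he, hs⟩
      refine ⟨?_, he⟩
      have hc := hE e he
      have h4 : ({a, b, c, d} : Finset V).card = 4 := by simp [hab, hac, had, hbc, hbd, hcd]
      obtain ⟨t, ht⟩ : ∃ t, ({a, b, c, d} : Finset V) \ e = {t} := by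
        rw [← Finset.card_eq_one, Finset.card_sdiff_of_subset hs]; omega
      have he' : e = ({a, b, c, d} : Finset V).erase t := by
        rw [Finset.erase_eq, ← ht, Finset.sdiff_sdiff_eq_self hs]
      have htm : t ∈ ({a, b, c, d} : Finset V) := by
        have : t ∈ ({a, b, c, d} : Finset V) \ e := by rw [ht]; simp
        exact (Finset.mem_sdiff.1 this).1
      simp only [Finset.mem_insert, Finset.mem_singleton] at htm
      rcases htm with rfl | rfl | rfl | rfl
      · right; right; right; rw [he']; ext x; simp; grind
      · right; right; left; rw [he']; ext x; simp; grind
      · right; left; rw [he']; ext x; simp; grind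
      · left; rw [he']; ext x; simp; grind
    · rintro ⟨h, he⟩
      refine ⟨he, ?_⟩
      rcases h with rfl | rfl | rfl | rfl <;> intro x <;> simp <;> tauto
  have n1 : ({a, b, c} : Finset V) ≠ {a, b, d} := fun h => by
    have : c ∈ ({a, b, d} : Finset V) := by rw [← h]; simp
    simp [hac.symm, hbc.symm, hcd] at this
  have n2 : ({a, b, c} : Finset V) ≠ {a, c, d} := fun h => by
    have : b ∈ ({a, c, d} : Finset V) := by rw [← h]; simp
    simp [hab.symm, hbc, hbd] at this
  have n3 : ({a, b, c} : Finset V) ≠ {b, c, d} := fun h => by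
    have : a ∈ ({b, c, d} : Finset V) := by rw [← h]; simp
    simp [hab, hac, had] at this
  have n4 : ({a, b, d} : Finset V) ≠ {a, c, d} := fun h => by
    have : b ∈ ({a, c, d} : Finset V) := by rw [← h]; simp
    simp [hab.symm, hbc, hbd] at this
  have n5 : ({a, b, d} : Finset V) ≠ {b, c, d} := fun h => by
    have : a ∈ ({b, c, d} : Finset V) := by rw [← h]; simp
    simp [hab, hac, had] at this
  have n6 : ({a, c, d} : Finset V) ≠ {b, c, d} := fun h => by
    have : a ∈ ({b, c, d} : Finset V) := by rw [← h]; simp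
    simp [hab, hac, had] at this
  rw [h1, Finset.card_filter, Finset.sum_insert (by simp [n1, n2, n3]),
    Finset.sum_insert (by simp [n4, n5]), Finset.sum_insert (by simp [n6]), Finset.sum_singleton]

lemma isD2_iff {E : Finset (Finset V)} (hE : ∀ e ∈ E, e.card = 3) {a b c d : V}
    (hab : a ≠ b) (hac : a ≠ c) (had : a ≠ d) (hbc : b ≠ c) (hbd : b ≠ d) (hcd : c ≠ d) :
    isD2 E {a, b, c, d} ↔
      (if {a, b, c} ∈ E then 1 else 0) + ((if {a, b, d} ∈ E then 1 else 0) +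
      ((if {a, c, d} ∈ E then 1 else 0) + (if {b, c, d} ∈ E then 1 else 0))) = 2 := by
  unfold isD2
  rw [count4 hE hab hac had hbc hbd hcd]
  have h4 : ({a, b, c, d} : Finset V).card = 4 := by simp [hab, hac, had, hbc, hbd, hcd]
  simp only [h4, true_and]

lemma lk_ne {E : Finset (Finset V)} (hE : ∀ e ∈ E, e.card = 3) {v x y : V}
    (h : (lk E v).Adj x y) : v ≠ x ∧ v ≠ y ∧ x ≠ y := card3 (hE _ h.2)

lemma lk_iff {E : Finset (Finset V)} {v x y : V} (h : x ≠ y) :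
    (lk E v).Adj x y ↔ {v, x, y} ∈ E := ⟨fun h => h.2, fun h' => ⟨h, h'⟩⟩

/-- two link edges force an edge -/
lemma link2 {E : Finset (Finset V)} (hE : ∀ e ∈ E, e.card = 3) {v a b c : V}
    (h1 : (lk E v).Adj a b) (h2 : (lk E v).Adj b c) (h3 : ¬ (lk E v).Adj a c) (hac : a ≠ c)
    (hD : ¬ isD2 E {v, a, b, c}) : {a, b, c} ∈ E := by
  have n1 := lk_ne hE h1
  have n2 := lk_ne hE h2
  rw [isD2_iff hE n1.1 n1.2.1 n2.2.1 n1.2.2 hac n2.2.2] at hD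
  rw [lk_iff hac] at h3
  by_contra h
  simp [h1.2, h2.2, h3, h] at hD

/-- one link edge forces a non-edge -/
lemma link1 {E : Finset (Finset V)} (hE : ∀ e ∈ E, e.card = 3) {v a b c : V}
    (h1 : (lk E v).Adj a b) (h2 : ¬ (lk E v).Adj b c) (h3 : ¬ (lk E v).Adj a c) (hac : a ≠ c)
    (hbc : b ≠ c) (hvc : v ≠ c)
    (hD : ¬ isD2 E {v, a, b, c}) : {a, b, c} ∉ E := by
  have n1 := lk_ne hE h1
  rw [isD2_iff hE n1.1 n1.2.1 hvc n1.2.2 hac hbc] at hD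
  rw [lk_iff hac] at h3
  rw [lk_iff hbc] at h2
  intro h
  simp [h1.2, h2, h3, h] at hD

lemma QQ_via {E : Finset (Finset V)} {v : V} {S : Finset V} {w x y z : V}
    (hS : S = {w, x, y, z}) (hwx : w ≠ x) (hwy : w ≠ y) (hwz : w ≠ z) (hxy : x ≠ y)
    (hxz : x ≠ z) (hyz : y ≠ z) (h : isD2 E {v, x, y, z}) : QQ E v S := by
  right
  refine ⟨w, by simp [hS], by simp [hS, hwx, hwy, hwz, hxy, hxz, hyz], ?_⟩
  have : S.erase w = {x, y, z} := by
    rw [hS, Finset.erase_insert]; simp [hwx, hwy, hwz]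
  rw [this]; exact h

lemma P4_QQ {E : Finset (Finset V)} (hE : ∀ e ∈ E, e.card = 3) {v : V} (w x y z : V)
    (h : IsP4 (lk E v) w x y z) : QQ E v {w, x, y, z} := by
  obtain ⟨h1, h2, h3, h4, h5, h6⟩ := h
  have n1 := lk_ne hE h1
  have n2 := lk_ne hE h2
  have n3 := lk_ne hE h3
  have wy : w ≠ y := by rintro rfl; exact h5 h3
  have wz : w ≠ z := by rintro rfl; exact h6 h1.symm
  have xz : x ≠ z := by rintro rfl; exact h5 h1
  have wx := n1.2.2
  have xy := n2.2.2
  have yz := n3.2.2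
  by_contra hc
  have d1 : ¬ isD2 E {v, w, x, y} := fun h => hc (QQ_via (w := z) (by ext; simp; tauto)
    wz.symm xz.symm yz.symm wx wy xy h)
  have d2 : ¬ isD2 E {v, x, y, z} := fun h => hc (QQ_via (w := w) (by ext; simp)
    wx wy wz xy xz yz h)
  have d3 : ¬ isD2 E {v, w, x, z} := fun h => hc (QQ_via (w := y) (by ext; simp; tauto)
    wy.symm xy.symm yz wx wz xz h)
  have d4 : ¬ isD2 E {v, y, z, w} := fun h => hc (QQ_via (w := x) (by ext; simp; tauto)
    xy xz wx.symm yz wy.symm wz.symm h)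
  have e1 := link2 hE h1 h2 h4 wy d1
  have e2 := link2 hE h2 h3 h6 xz d2
  have e3 := link1 hE h1 h6 h5 wz xz n3.2.1 d3
  have e4 := link1 hE h3 (fun h => h5 h.symm) (fun h => h4 h.symm) wy.symm wz.symm n1.1 d4
  have ee : ({y, z, w} : Finset V) = {w, y, z} := by ext; simp; tauto
  rw [ee] at e4
  refine hc (Or.inl ?_)
  rw [isD2_iff hE wx wy wz xy xz yz]
  simp [e1, e2, e3, e4]

/-- the key quadruple -/
lemma quadZ {E : Finset (Finset V)} (hE : ∀ e ∈ E, e.card = 3) {v c c' x z : V}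
    (hcz : (lk E v).Adj c z) (hcz' : (lk E v).Adj c' z) (hcc : ¬ (lk E v).Adj c c')
    (hcx : ¬ (lk E v).Adj c x) (hcx' : ¬ (lk E v).Adj c' x) (hxz : ¬ (lk E v).Adj x z)
    (hx : v ≠ x) (nxz : x ≠ z) (he : {c, c', x} ∈ E) : QQ E v {c, c', x, z} := by
  obtain ⟨ncc, ncx, ncx'⟩ := card3 (hE _ he)
  have n1 := lk_ne hE hcz
  have n2 := lk_ne hE hcz'
  have cz := n1.2.2
  have cz' := n2.2.2
  by_contra hc
  have d1 : ¬ isD2 E {v, c, z, c'} := fun h => hc (QQ_via (w := x) (by ext; simp; tauto)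
    ncx.symm nxz ncx'.symm cz ncc cz'.symm h)
  have d2 : ¬ isD2 E {v, c, z, x} := fun h => hc (QQ_via (w := c') (by ext; simp; tauto)
    ncc.symm cz' ncx' cz ncx nxz.symm h)
  have d3 : ¬ isD2 E {v, c', z, x} := fun h => hc (QQ_via (w := c) (by ext; simp; tauto)
    ncc cz ncx cz' ncx' nxz.symm h)
  have e1 := link2 hE hcz hcz'.symm hcc ncc d1
  have e2 := link1 hE hcz (fun h => hxz h.symm) hcx ncx nxz.symm hx d2
  have e3 := link1 hE hcz' (fun h => hxz h.symm) hcx' ncx' nxz.symm hx d3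
  have q1 : ({c, z, c'} : Finset V) = {c, c', z} := by ext; simp; tauto
  have q2 : ({c, z, x} : Finset V) = {c, x, z} := by ext; simp; tauto
  have q3 : ({c', z, x} : Finset V) = {c', x, z} := by ext; simp; tauto
  rw [q1] at e1; rw [q2] at e2; rw [q3] at e3
  refine hc (Or.inl ?_)
  rw [isD2_iff hE ncc ncx cz ncx' cz' nxz]
  simp [he, e1, e2, e3]

lemma quadX {E : Finset (Finset V)} (hE : ∀ e ∈ E, e.card = 3) {v x x' y y' : V}
    (h1 : {x, x', y} ∈ E) (h2 : {x, x', y'} ∈ E) (hy : y ≠ y')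
    (h3 : {y, y', x} ∉ E) (h4 : {y, y', x'} ∉ E) : QQ E v {x, x', y, y'} := by
  obtain ⟨a1, a2, a3⟩ := card3 (hE _ h1)
  obtain ⟨b1, b2, b3⟩ := card3 (hE _ h2)
  have q1 : ({y, y', x} : Finset V) = {x, y, y'} := by ext; simp; tauto
  have q2 : ({y, y', x'} : Finset V) = {x', y, y'} := by ext; simp; tauto
  rw [q1] at h3; rw [q2] at h4
  refine Or.inl ?_
  rw [isD2_iff hE a1 a2 b2 a3 b3 hy]
  simp [h1, h2, h3, h4]
end hyper

section hyper2
variable {V : Type} [DecidableEq V]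

lemma mono3 {A B C W : Finset V} (hA : A ⊆ W) (hB : B ⊆ W) (hC : C ⊆ W) (f : V → V → V → ℝ)
    (hf : ∀ a b c, 0 ≤ f a b c) :
    ∑ a ∈ A, ∑ b ∈ B, ∑ c ∈ C, f a b c ≤ ∑ a ∈ W, ∑ b ∈ W, ∑ c ∈ W, f a b c := by
  calc _ ≤ ∑ a ∈ A, ∑ b ∈ W, ∑ c ∈ W, f a b c := by
        refine sum_le_sum fun a _ => ?_
        calc _ ≤ ∑ b ∈ B, ∑ c ∈ W, f a b c := sum_le_sum fun b _ =>
              sum_le_sum_of_subset_of_nonneg hC fun _ _ _ => hf _ _ _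
          _ ≤ _ := sum_le_sum_of_subset_of_nonneg hB fun _ _ _ => sum_nonneg fun _ _ => hf _ _ _
    _ ≤ _ := sum_le_sum_of_subset_of_nonneg hA fun _ _ _ => sum_nonneg fun _ _ => sum_nonneg fun _ _ => hf _ _ _

lemma mono4 {A B C D W : Finset V} (hA : A ⊆ W) (hB : B ⊆ W) (hC : C ⊆ W) (hD : D ⊆ W)
    (f : V → V → V → V → ℝ) (hf : ∀ a b c d, 0 ≤ f a b c d) :
    ∑ a ∈ A, ∑ b ∈ B, ∑ c ∈ C, ∑ d ∈ D, f a b c d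
      ≤ ∑ a ∈ W, ∑ b ∈ W, ∑ c ∈ W, ∑ d ∈ W, f a b c d := by
  calc _ ≤ ∑ a ∈ A, ∑ b ∈ W, ∑ c ∈ W, ∑ d ∈ W, f a b c d :=
        sum_le_sum fun a _ => mono3 hB hC hD _ (hf a)
    _ ≤ _ := sum_le_sum_of_subset_of_nonneg hA fun _ _ _ => sum_nonneg fun _ _ => sum_nonneg fun _ _ => sum_nonneg fun _ _ => hf _ _ _ _

noncomputable def T3 (E : Finset (Finset V)) (A B X : Finset V) : ℝ :=
  ∑ a ∈ A, ∑ b ∈ B, ∑ x ∈ X, ind ({a, b, x} ∈ E)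

lemma L1pt {E : Finset (Finset V)} (hE : ∀ e ∈ E, e.card = 3) {v c c' x z : V}
    (hvx : v ≠ x) (hxz : x ≠ z) (hcz : c ≠ z) (hcz' : c' ≠ z) :
    ind ({c, c', x} ∈ E) ≤ ind ((lk E v).Adj x c) + ind ((lk E v).Adj x c') + ind (isD2 E {v, c, c', x})
      + ind ((lk E v)ᶜ.Adj c z) + ind ((lk E v)ᶜ.Adj c' z) + ind ((lk E v).Adj x z)
      + qi (QQ E v) c c' x z := by
  have n1 := ind_nonneg ((lk E v).Adj x c)
  have n2 := ind_nonneg ((lk E v).Adj x c')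
  have n3 := ind_nonneg (isD2 E {v, c, c', x})
  have n4 := ind_nonneg ((lk E v)ᶜ.Adj c z)
  have n5 := ind_nonneg ((lk E v)ᶜ.Adj c' z)
  have n6 := ind_nonneg ((lk E v).Adj x z)
  have n7 := qi_nonneg (QQ E v) c c' x z
  by_cases h : {c, c', x} ∈ E
  swap
  · rw [ind_false h]; positivity
  have hd := card3 (hE _ h)
  rw [ind_true h]
  by_cases h1 : (lk E v).Adj x c
  · rw [ind_true h1]; linarith
  by_cases h2 : (lk E v).Adj x c'
  · rw [ind_true h2]; linarith
  by_cases h3 : isD2 E {v, c, c', x}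
  · rw [ind_true h3]; linarith
  by_cases h4 : (lk E v)ᶜ.Adj c z
  · rw [ind_true h4]; linarith
  by_cases h5 : (lk E v)ᶜ.Adj c' z
  · rw [ind_true h5]; linarith
  by_cases h6 : (lk E v).Adj x z
  · rw [ind_true h6]; linarith
  have h1' : ¬ (lk E v).Adj c x := fun h => h1 h.symm
  have h2' : ¬ (lk E v).Adj c' x := fun h => h2 h.symm
  simp only [SimpleGraph.compl_adj, not_and, not_not] at h4 h5
  by_cases h7 : (lk E v).Adj c c'
  · exact absurd h (link1 hE h7 h2' h1' hd.2.1 hd.2.2 hvx h3)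
  · have := quadZ hE (h4 hcz) (h5 hcz') h7 h1' h2' h6 hvx hxz h
    rw [qi_one this rfl]; linarith

lemma L2pt {E : Finset (Finset V)} (hE : ∀ e ∈ E, e.card = 3) {v c c' x : V}
    (hvx : v ≠ x) :
    ind ({c, c', x} ∈ E) ≤ ind ((lk E v).Adj x c) + ind ((lk E v).Adj x c') + ind (isD2 E {v, c, c', x})
      + ind ((lk E v)ᶜ.Adj c c') := by
  have n1 := ind_nonneg ((lk E v).Adj x c)
  have n2 := ind_nonneg ((lk E v).Adj x c')
  have n3 := ind_nonneg (isD2 E {v, c, c', x})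
  have n4 := ind_nonneg ((lk E v)ᶜ.Adj c c')
  by_cases h : {c, c', x} ∈ E
  swap
  · rw [ind_false h]; positivity
  have hd := card3 (hE _ h)
  rw [ind_true h]
  by_cases h1 : (lk E v).Adj x c
  · rw [ind_true h1]; linarith
  by_cases h2 : (lk E v).Adj x c'
  · rw [ind_true h2]; linarith
  by_cases h3 : isD2 E {v, c, c', x}
  · rw [ind_true h3]; linarith
  by_cases h4 : (lk E v)ᶜ.Adj c c'
  · rw [ind_true h4]; linarith
  have h1' : ¬ (lk E v).Adj c x := fun h => h1 h.symm
  have h2' : ¬ (lk E v).Adj c' x := fun h => h2 h.symm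
  simp only [SimpleGraph.compl_adj, not_and, not_not] at h4
  exact absurd h (link1 hE (h4 hd.1) h2' h1' hd.2.1 hd.2.2 hvx h3)

lemma L1sum {E : Finset (Finset V)} (hE : ∀ e ∈ E, e.card = 3) {v : V} {A X Z W0 : Finset V}
    {n τ η : ℝ} (hv : v ∉ W0) (hA : A ⊆ W0) (hX : X ⊆ W0) (hZ : Z ⊆ W0) (hn : (W0.card : ℝ) ≤ n)
    (hXZ : Disjoint X Z) (hAZ : Disjoint A Z)
    (e1 : ec (lk E v) X A ≤ η * n ^ 2) (e2 : ec (lk E v)ᶜ A Z ≤ η * n ^ 2)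
    (e3 : ec (lk E v) X Z ≤ η * n ^ 2)
    (q4 : ∑ a ∈ W0, ∑ b ∈ W0, ∑ c ∈ W0, ∑ d ∈ W0, qi (QQ E v) a b c d ≤ τ * n ^ 4)
    (j3 : ∑ a ∈ W0, ∑ b ∈ W0, ∑ c ∈ W0, ind (isD2 E {v, a, b, c}) ≤ τ * n ^ 3) :
    Z.card * T3 E A A X ≤ Z.card * ((2 * η + τ) * n ^ 3) + (3 * η + τ) * n ^ 4 := by
  have hA' := (card_le_of_sub hA).trans hn
  have hX' := (card_le_of_sub hX).trans hn
  have hZ' := (card_le_of_sub hZ).trans hn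
  have hA0 : (0:ℝ) ≤ A.card := by positivity
  have hX0 : (0:ℝ) ≤ X.card := by positivity
  have hZ0 : (0:ℝ) ≤ Z.card := by positivity
  have hn0 : 0 ≤ n := hA0.trans hA'
  have hη : 0 ≤ η * n ^ 2 := (ec_nonneg _ _ _).trans e1
  have t1 : ∑ c ∈ A, ∑ c' ∈ A, ∑ x ∈ X, ∑ z ∈ Z, ind ((lk E v).Adj x c) = A.card * (Z.card * ec (lk E v) X A) := by
    rw [ec_comm]; simp only [ec, sum_const, nsmul_eq_mul, mul_sum, SimpleGraph.adj_comm]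
  have t2 : ∑ c ∈ A, ∑ c' ∈ A, ∑ x ∈ X, ∑ z ∈ Z, ind ((lk E v).Adj x c') = A.card * (Z.card * ec (lk E v) X A) := by
    rw [ec_comm]; simp only [ec, sum_const, nsmul_eq_mul, mul_sum, SimpleGraph.adj_comm]
  have t3 : ∑ c ∈ A, ∑ c' ∈ A, ∑ x ∈ X, ∑ z ∈ Z, ind (isD2 E {v, c, c', x}) ≤ Z.card * (τ * n ^ 3) := by
    simp only [sum_const, nsmul_eq_mul, ← mul_sum]
    refine mul_le_mul_of_nonneg_left ((mono3 hA hA hX (fun a b c => ind (isD2 E {v, a, b, c})) fun _ _ _ => ind_nonneg _).trans j3) hZ0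
  have t4 : ∑ c ∈ A, ∑ c' ∈ A, ∑ x ∈ X, ∑ z ∈ Z, ind ((lk E v)ᶜ.Adj c z) = A.card * (X.card * ec (lk E v)ᶜ A Z) := by
    simp only [ec, sum_const, nsmul_eq_mul, mul_sum]
  have t5 : ∑ c ∈ A, ∑ c' ∈ A, ∑ x ∈ X, ∑ z ∈ Z, ind ((lk E v)ᶜ.Adj c' z) = A.card * (X.card * ec (lk E v)ᶜ A Z) := by
    simp only [ec, sum_const, nsmul_eq_mul, mul_sum]
  have t6 : ∑ c ∈ A, ∑ c' ∈ A, ∑ x ∈ X, ∑ z ∈ Z, ind ((lk E v).Adj x z) = A.card * (A.card * ec (lk E v) X Z) := by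
    simp only [ec, sum_const, nsmul_eq_mul, mul_sum]
  have t7 := (mono4 hA hA hX hZ (qi (QQ E v)) (qi_nonneg _)).trans q4
  have key : ∑ c ∈ A, ∑ c' ∈ A, ∑ x ∈ X, ∑ z ∈ Z, ind ({c, c', x} ∈ E) ≤
     ∑ c ∈ A, ∑ c' ∈ A, ∑ x ∈ X, ∑ z ∈ Z, (ind ((lk E v).Adj x c) + ind ((lk E v).Adj x c') + ind (isD2 E {v, c, c', x})
      + ind ((lk E v)ᶜ.Adj c z) + ind ((lk E v)ᶜ.Adj c' z) + ind ((lk E v).Adj x z)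
      + qi (QQ E v) c c' x z) := by
    refine sum_le_sum fun c hc => sum_le_sum fun c' hc' => sum_le_sum fun x hx => sum_le_sum fun z hz => ?_
    refine L1pt hE (by rintro rfl; exact hv (hX hx)) (disjoint_left.1 hXZ hx |> fun h => ?_) ?_ ?_
    · rintro rfl; exact h hz
    · rintro rfl; exact disjoint_left.1 hAZ hc hz
    · rintro rfl; exact disjoint_left.1 hAZ hc' hz
  have l : ∑ c ∈ A, ∑ c' ∈ A, ∑ x ∈ X, ∑ z ∈ Z, ind ({c, c', x} ∈ E) = Z.card * T3 E A A X := by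
    simp only [T3, sum_const, nsmul_eq_mul, mul_sum]
  simp only [sum_add_distrib] at key
  rw [l, t1, t2, t4, t5, t6] at key
  have b1 : (A.card : ℝ) * (Z.card * ec (lk E v) X A) ≤ n * (Z.card * (η * n ^ 2)) := by
    have := ec_nonneg (lk E v) X A
    gcongr
  have b2 : (A.card : ℝ) * (X.card * ec (lk E v)ᶜ A Z) ≤ n * (n * (η * n ^ 2)) := by
    have := ec_nonneg (lk E v)ᶜ A Z
    have := ec_nonneg (lk E v) X Z
    gcongr
  have b3 : (A.card : ℝ) * (A.card * ec (lk E v) X Z) ≤ n * (n * (η * n ^ 2)) := by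
    have := ec_nonneg (lk E v)ᶜ A Z
    have := ec_nonneg (lk E v) X Z
    gcongr
  linarith

lemma L2sum {E : Finset (Finset V)} (hE : ∀ e ∈ E, e.card = 3) {v : V} {A B X W0 : Finset V}
    {n τ η : ℝ} (hv : v ∉ W0) (hA : A ⊆ W0) (hB : B ⊆ W0) (hX : X ⊆ W0) (hn : (W0.card : ℝ) ≤ n)
    (e1 : ec (lk E v) X A ≤ η * n ^ 2) (e2 : ec (lk E v) X B ≤ η * n ^ 2)
    (e3 : ec (lk E v)ᶜ A B ≤ η * n ^ 2)
    (j3 : ∑ a ∈ W0, ∑ b ∈ W0, ∑ c ∈ W0, ind (isD2 E {v, a, b, c}) ≤ τ * n ^ 3) :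
    T3 E A B X ≤ (3 * η + τ) * n ^ 3 := by
  have hA' := (card_le_of_sub hA).trans hn
  have hX' := (card_le_of_sub hX).trans hn
  have hB' := (card_le_of_sub hB).trans hn
  have hA0 : (0:ℝ) ≤ A.card := by positivity
  have hX0 : (0:ℝ) ≤ X.card := by positivity
  have hn0 : 0 ≤ n := hA0.trans hA'
  have hη : 0 ≤ η * n ^ 2 := (ec_nonneg _ _ _).trans e1
  have t1 : ∑ c ∈ A, ∑ c' ∈ B, ∑ x ∈ X, ind ((lk E v).Adj x c) = B.card * ec (lk E v) X A := by
    rw [ec_comm]; simp only [ec, sum_const, nsmul_eq_mul, mul_sum, SimpleGraph.adj_comm]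
  have t2 : ∑ c ∈ A, ∑ c' ∈ B, ∑ x ∈ X, ind ((lk E v).Adj x c') = A.card * ec (lk E v) X B := by
    rw [ec_comm]; simp only [ec, sum_const, nsmul_eq_mul, mul_sum, SimpleGraph.adj_comm]
  have t3 : ∑ c ∈ A, ∑ c' ∈ B, ∑ x ∈ X, ind (isD2 E {v, c, c', x}) ≤ (τ * n ^ 3) :=
    ((mono3 hA hB hX (fun a b c => ind (isD2 E {v, a, b, c})) fun _ _ _ => ind_nonneg _).trans j3)
  have t4 : ∑ c ∈ A, ∑ c' ∈ B, ∑ x ∈ X, ind ((lk E v)ᶜ.Adj c c') = X.card * ec (lk E v)ᶜ A B := by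
    simp only [ec, sum_const, nsmul_eq_mul, mul_sum]
  have key : T3 E A B X ≤
     ∑ c ∈ A, ∑ c' ∈ B, ∑ x ∈ X, (ind ((lk E v).Adj x c) + ind ((lk E v).Adj x c') + ind (isD2 E {v, c, c', x})
      + ind ((lk E v)ᶜ.Adj c c')) := by
    refine sum_le_sum fun c hc => sum_le_sum fun c' hc' => sum_le_sum fun x hx => ?_
    exact L2pt hE (by rintro rfl; exact hv (hX hx))
  simp only [sum_add_distrib] at key
  rw [t1, t2, t4] at key
  have b1 : (B.card : ℝ) * ec (lk E v) X A ≤ n * (η * n ^ 2) := by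
    have := ec_nonneg (lk E v) X A
    gcongr
  have b2 : (A.card : ℝ) * ec (lk E v) X B ≤ n * (η * n ^ 2) := by
    have := ec_nonneg (lk E v) X B
    gcongr
  have b3 : (X.card : ℝ) * ec (lk E v)ᶜ A B ≤ n * (η * n ^ 2) := by
    have := ec_nonneg (lk E v)ᶜ A B
    gcongr
  linarith

lemma T1bound {E : Finset (Finset V)} (hE : ∀ e ∈ E, e.card = 3) {v : V}
    {W0 X Y Y1 Y2 Z1 Z2 : Finset V}
    {n τ η ξ : ℝ} (hv : v ∉ W0) (hn : (W0.card : ℝ) ≤ n) (hn0 : 0 < n)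
    (hξ : 0 < ξ) (hξ1 : ξ < 1) (hτη : τ ≤ η) (hη : 0 ≤ η)
    (S : Str (lk E v) W0 n ξ η X Y Y1 Y2 Z1 Z2)
    (q4 : ∑ a ∈ W0, ∑ b ∈ W0, ∑ c ∈ W0, ∑ d ∈ W0, qi (QQ E v) a b c d ≤ τ * n ^ 4)
    (j3 : ∑ a ∈ W0, ∑ b ∈ W0, ∑ c ∈ W0, ind (isD2 E {v, a, b, c}) ≤ τ * n ^ 3) :
    T3 E Y Y X ≤ 88000 * η / ξ ^ 2 * n ^ 3 := by
  have h1Y : Y1 ⊆ Y := by rw [← S.un]; exact subset_union_left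
  have h2Y : Y2 ⊆ Y := by rw [← S.un]; exact subset_union_right
  have e1 : ec (lk E v) X Y1 ≤ η * n ^ 2 := (ec_mono _ (subset_refl _) h1Y).trans S.eXY
  have e2 : ec (lk E v) X Y2 ≤ η * n ^ 2 := (ec_mono _ (subset_refl _) h2Y).trans S.eXY
  have hs1 := h1Y.trans S.sY
  have hs2 := h2Y.trans S.sY
  have conv : ∀ (Z : Finset V) (T : ℝ), ξ ^ 2 / 4000 * n ≤ Z.card →
      Z.card * T ≤ Z.card * ((2 * η + τ) * n ^ 3) + (3 * η + τ) * n ^ 4 →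
      T ≤ 28000 * η / ξ ^ 2 * n ^ 3 := by
    intro Z T hZ h
    have hγ : 0 < ξ ^ 2 / 4000 * n := by positivity
    have hz : (0 : ℝ) < Z.card := hγ.trans_le hZ
    have h3 : 4 * η * n ^ 4 ≤ Z.card * (16000 * η / ξ ^ 2 * n ^ 3) := by
      calc 4 * η * n ^ 4 = (ξ ^ 2 / 4000 * n) * (16000 * η / ξ ^ 2 * n ^ 3) := by field_simp; norm_num; ring
        _ ≤ _ := by gcongr
    have h4 : (3 * η + τ) * n ^ 4 ≤ 4 * η * n ^ 4 := by gcongr; linarith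
    have h5 : (2 * η + τ) * n ^ 3 ≤ 3 * η * n ^ 3 := by gcongr; linarith
    have h6 : 3 * η * n ^ 3 ≤ 12000 * η / ξ ^ 2 * n ^ 3 := by
      gcongr
      rw [le_div_iff₀ (by positivity)]
      have : ξ ^ 2 ≤ 1 := by nlinarith
      nlinarith
    have : Z.card * T ≤ Z.card * (28000 * η / ξ ^ 2 * n ^ 3) := by
      calc Z.card * T ≤ Z.card * ((2 * η + τ) * n ^ 3) + (3 * η + τ) * n ^ 4 := h
        _ ≤ Z.card * (12000 * η / ξ ^ 2 * n ^ 3) + Z.card * (16000 * η / ξ ^ 2 * n ^ 3) := by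
          have := mul_le_mul_of_nonneg_left (h5.trans h6) hz.le
          linarith
        _ = _ := by ring
    exact le_of_mul_le_mul_left this hz
  have a1 := conv _ _ S.cZ1 (L1sum hE hv hs1 S.sX S.sZ1 hn S.dXZ1 S.dYZ1 e1 S.eYZ1 S.eXZ1 q4 j3)
  have a2 := conv _ _ S.cZ2 (L1sum hE hv hs2 S.sX S.sZ2 hn S.dXZ2 S.dYZ2 e2 S.eYZ2 S.eXZ2 q4 j3)
  have a3 := L2sum hE hv hs1 hs2 S.sX hn e1 e2 S.eYY j3
  have a4 := L2sum hE hv hs2 hs1 S.sX hn e2 e1 (by rw [ec_comm]; exact S.eYY) j3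
  have spl : T3 E Y Y X = T3 E Y1 Y1 X + T3 E Y1 Y2 X + (T3 E Y2 Y1 X + T3 E Y2 Y2 X) := by
    unfold T3
    rw [← S.un, sum_union S.dYY]
    simp only [sum_union S.dYY, sum_add_distrib]
  have h4 : (3 * η + τ) * n ^ 3 ≤ 4 * η * n ^ 3 := by gcongr; linarith
  have h6 : 4 * η * n ^ 3 ≤ 16000 * η / ξ ^ 2 * n ^ 3 := by
      gcongr
      rw [le_div_iff₀ (by positivity)]
      have : ξ ^ 2 ≤ 1 := by nlinarith
      nlinarith
  rw [spl]
  calc _ ≤ 28000 * η / ξ ^ 2 * n ^ 3 + 16000 * η / ξ ^ 2 * n ^ 3 + (16000 * η / ξ ^ 2 * n ^ 3 + 28000 * η / ξ ^ 2 * n ^ 3) := by linarith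
    _ = _ := by ring

lemma T2pt {E : Finset (Finset V)} (hE : ∀ e ∈ E, e.card = 3) {v x x' y y' : V} :
    ind ({x, x', y} ∈ E) * ind ({x, x', y'} ∈ E) ≤ ind (y = y') + ind ({y, y', x} ∈ E)
     + ind ({y, y', x'} ∈ E) + qi (QQ E v) x x' y y' := by
  have n1 := ind_nonneg (y = y')
  have n2 := ind_nonneg ({y, y', x} ∈ E)
  have n3 := ind_nonneg ({y, y', x'} ∈ E)
  have n4 := qi_nonneg (QQ E v) x x' y y'
  by_cases h : {x, x', y} ∈ E
  swap
  · rw [ind_false h]; nlinarith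
  by_cases h' : {x, x', y'} ∈ E
  swap
  · rw [ind_false h']; nlinarith
  rw [ind_true h, ind_true h']
  by_cases h1 : y = y'
  · rw [ind_true h1]; linarith
  by_cases h2 : {y, y', x} ∈ E
  · rw [ind_true h2]; linarith
  by_cases h3 : {y, y', x'} ∈ E
  · rw [ind_true h3]; linarith
  rw [qi_one (quadX (v := v) hE h h' h1 h2 h3) rfl]; linarith

lemma T2bound {E : Finset (Finset V)} (hE : ∀ e ∈ E, e.card = 3) {v : V}
    {W0 X Y : Finset V} {n τ ω1 ω : ℝ} (hn : (W0.card : ℝ) ≤ n) (hn0 : 0 < n)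
    (hX : X ⊆ W0) (hY : Y ⊆ W0) (hτ : 1 ≤ τ * n) (hω : 0 < ω) (hω1 : 2 * τ + 2 * ω1 ≤ ω ^ 2)
    (q4 : ∑ a ∈ W0, ∑ b ∈ W0, ∑ c ∈ W0, ∑ d ∈ W0, qi (QQ E v) a b c d ≤ τ * n ^ 4)
    (hT : T3 E Y Y X ≤ ω1 * n ^ 3) : T3 E X X Y ≤ ω * n ^ 3 := by
  have hX' := (card_le_of_sub hX).trans hn
  have hY' := (card_le_of_sub hY).trans hn
  have hX0 : (0:ℝ) ≤ X.card := by positivity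
  have hY0 : (0:ℝ) ≤ Y.card := by positivity
  have T0 : 0 ≤ T3 E Y Y X := sum_nonneg fun _ _ => sum_nonneg fun _ _ => sum_nonneg fun _ _ => ind_nonneg _
  set d : V → V → ℝ := fun x x' => ∑ y ∈ Y, ind ({x, x', y} ∈ E) with hd
  have sq : ∑ x ∈ X, ∑ x' ∈ X, (d x x') ^ 2 ≤ ω ^ 2 * n ^ 4 := by
    have k : ∑ x ∈ X, ∑ x' ∈ X, (d x x') ^ 2 ≤ ∑ x ∈ X, ∑ x' ∈ X, ∑ y ∈ Y, ∑ y' ∈ Y, (ind (y = y') + ind ({y, y', x} ∈ E)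
     + ind ({y, y', x'} ∈ E) + qi (QQ E v) x x' y y') := by
      refine sum_le_sum fun x _ => sum_le_sum fun x' _ => ?_
      rw [sq, hd, sum_mul_sum]
      exact sum_le_sum fun y _ => sum_le_sum fun y' _ => T2pt hE
    simp only [sum_add_distrib] at k
    have t1 : ∑ x ∈ X, ∑ x' ∈ X, ∑ y ∈ Y, ∑ y' ∈ Y, ind (y = y') = X.card * (X.card * Y.card) := by
      have : ∀ y ∈ Y, ∑ y' ∈ Y, ind (y = y') = 1 := by
        intro y hy
        rw [sum_eq_single y]
        · exact ind_true rfl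
        · intro b _ hb; exact ind_false (Ne.symm hb)
        · intro h; exact absurd hy h
      rw [sum_congr rfl fun x _ => sum_congr rfl fun x' _ => sum_congr rfl this]
      simp
    have cm : ∑ x ∈ X, ∑ y ∈ Y, ∑ y' ∈ Y, ind ({y, y', x} ∈ E) = T3 E Y Y X := by
      unfold T3
      rw [sum_comm]
      exact sum_congr rfl fun y _ => sum_comm
    have t2 : ∑ x ∈ X, ∑ x' ∈ X, ∑ y ∈ Y, ∑ y' ∈ Y, ind ({y, y', x} ∈ E) = X.card * T3 E Y Y X := by
      rw [← cm]
      simp only [sum_const, nsmul_eq_mul, mul_sum]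
    have t3 : ∑ x ∈ X, ∑ x' ∈ X, ∑ y ∈ Y, ∑ y' ∈ Y, ind ({y, y', x'} ∈ E) = X.card * T3 E Y Y X := by
      rw [← cm]
      simp only [sum_const, nsmul_eq_mul, mul_sum]
    have t4 := (mono4 hX hX hY hY (qi (QQ E v)) (qi_nonneg _)).trans q4
    rw [t1, t2, t3] at k
    have b1 : (X.card : ℝ) * (X.card * Y.card) ≤ n * (n * n) := by gcongr
    have b2 : (X.card : ℝ) * T3 E Y Y X ≤ n * (ω1 * n ^ 3) := by gcongr
    have b3 : n * (n * n) ≤ τ * n ^ 4 := by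
      calc n * (n * n) = 1 * n ^ 3 := by ring
        _ ≤ (τ * n) * n ^ 3 := by gcongr
        _ = _ := by ring
    calc _ ≤ (2 * τ + 2 * ω1) * n ^ 4 := by linarith
      _ ≤ _ := by gcongr
  have pt : ∀ x x', d x x' ≤ (d x x') ^ 2 * (1 / (2 * ω * n)) + ω * n / 2 := by
    intro x x'
    have h := sq_nonneg (d x x' - ω * n)
    have hp : 0 < ω * n := by positivity
    have : (d x x') ^ 2 * (1 / (2 * ω * n)) + ω * n / 2 - d x x' = (d x x' - ω * n) ^ 2 * (1 / (2 * ω * n)) := by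
      field_simp; ring
    have : 0 ≤ (d x x' - ω * n) ^ 2 * (1 / (2 * ω * n)) := by positivity
    linarith
  calc T3 E X X Y = ∑ x ∈ X, ∑ x' ∈ X, d x x' := rfl
    _ ≤ ∑ x ∈ X, ∑ x' ∈ X, ((d x x') ^ 2 * (1 / (2 * ω * n)) + ω * n / 2) :=
      sum_le_sum fun _ _ => sum_le_sum fun _ _ => pt _ _
    _ = (∑ x ∈ X, ∑ x' ∈ X, (d x x') ^ 2) * (1 / (2 * ω * n)) + X.card * (X.card * (ω * n / 2)) := by
      simp only [sum_add_distrib, sum_const, nsmul_eq_mul, ← sum_mul]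
    _ ≤ ω ^ 2 * n ^ 4 * (1 / (2 * ω * n)) + n * (n * (ω * n / 2)) := by gcongr
    _ = _ := by field_simp; ring
end hyper2

section hyper3
variable {V : Type} [DecidableEq V]

lemma eXXY_le {E : Finset (Finset V)} (hE : ∀ e ∈ E, e.card = 3) {X Y : Finset V}
    (hd : Disjoint X Y) : (eXXY E X Y : ℝ) ≤ T3 E X X Y := by
  have hT : T3 E X X Y = (((X ×ˢ X ×ˢ Y).filter (fun p => {p.1, p.2.1, p.2.2} ∈ E)).card : ℝ) := by
    rw [← sum_ind_eq]
    simp only [sum_product, T3]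
  rw [hT]
  unfold eXXY
  norm_cast
  set F := (X ×ˢ X ×ˢ Y).filter (fun p => {p.1, p.2.1, p.2.2} ∈ E) with hF
  refine le_trans ?_ (card_image_le (s := F) (f := fun p : V × V × V => ({p.1, p.2.1, p.2.2} : Finset V)))
  apply card_le_card
  intro e he
  obtain ⟨he, h1, h2⟩ := mem_filter.1 he
  obtain ⟨x, x', hxx, hx⟩ := card_eq_two.1 h1
  obtain ⟨y, hy⟩ := card_eq_one.1 h2
  have mx : x ∈ e ∩ X := by rw [hx]; simp
  have mx' : x' ∈ e ∩ X := by rw [hx]; simp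
  have my : y ∈ e ∩ Y := by rw [hy]; simp
  rw [mem_inter] at mx mx' my
  have xy : x ≠ y := by rintro rfl; exact disjoint_left.1 hd mx.2 my.2
  have xy' : x' ≠ y := by rintro rfl; exact disjoint_left.1 hd mx'.2 my.2
  have heq : {x, x', y} = e := by
    apply eq_of_subset_of_card_le
    · intro t; simp only [mem_insert, mem_singleton]; rintro (rfl | rfl | rfl)
      exacts [mx.1, mx'.1, my.1]
    · rw [hE e he]; simp [hxx, xy, xy']
  rw [mem_image]
  refine ⟨(x, x', y), ?_, heq⟩
  rw [hF, mem_filter]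
  simp [mx.2, mx'.2, my.2, heq, he]

lemma den_lb {X Y : Finset V} {ξ n : ℝ} (hξ : 0 < ξ) (hn : 100 ≤ ξ * n)
    (hX : ξ / 10 * n ≤ X.card) (hY : ξ / 10 * n ≤ Y.card) :
    ξ ^ 3 / 4000 * n ^ 3 ≤ (X.card.choose 2 : ℝ) * Y.card := by
  rw [Nat.cast_choose_two]
  set a : ℝ := (X.card : ℝ)
  set b : ℝ := (Y.card : ℝ)
  have h1 : 10 ≤ ξ / 10 * n := by linarith
  have h2 : a / 2 ≤ a - 1 := by linarith
  have ha : 0 ≤ a := by linarith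
  have h3 : (ξ / 10 * n) * ((ξ / 10 * n) / 2) / 2 ≤ a * (a - 1) / 2 := by
    gcongr
    linarith
  calc ξ ^ 3 / 4000 * n ^ 3 = (ξ / 10 * n) * ((ξ / 10 * n) / 2) / 2 * (ξ / 10 * n) := by ring
    _ ≤ _ := by
      have : 0 ≤ (ξ / 10 * n) * ((ξ / 10 * n) / 2) / 2 := by positivity
      gcongr
      linarith

lemma hom_of_str {E : Finset (Finset V)} (hE : ∀ e ∈ E, e.card = 3) {v : V}
    {W0 X Y Y1 Y2 Z1 Z2 : Finset V}
    {n τ η ξ ε : ℝ} (hv : v ∉ W0) (hn : (W0.card : ℝ) ≤ n) (hn1 : 100 ≤ ξ * n)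
    (hξ : 0 < ξ) (hξ1 : ξ < 1) (hε : 0 < ε) (hε1 : ε < 1) (hτη : τ ≤ η) (hη : 0 ≤ η)
    (hτ : 1 ≤ τ * n) (hpar : 2 * τ + 2 * (88000 * η / ξ ^ 2) ≤ (ε * ξ ^ 3 / 4000) ^ 2)
    (S : Str (lk E v) W0 n ξ η X Y Y1 Y2 Z1 Z2)
    (q4 : ∑ a ∈ W0, ∑ b ∈ W0, ∑ c ∈ W0, ∑ d ∈ W0, qi (QQ E v) a b c d ≤ τ * n ^ 4)
    (j3 : ∑ a ∈ W0, ∑ b ∈ W0, ∑ c ∈ W0, ind (isD2 E {v, a, b, c}) ≤ τ * n ^ 3) :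
    (eXXY E X Y : ℝ) ≤ ε * ((X.card.choose 2 : ℝ) * Y.card) ∧
    (eXXY E Y X : ℝ) ≤ ε * ((Y.card.choose 2 : ℝ) * X.card) := by
  have hn0 : 0 < n := by by_contra h; push Not at h; nlinarith
  have hτ0 : 0 < τ := by by_contra h; push Not at h; nlinarith
  have b1 := T1bound hE hv hn hn0 hξ hξ1 hτη hη S q4 j3
  have hω : 0 < ε * ξ ^ 3 / 4000 := by positivity
  have b2 := T2bound hE hn hn0 S.sX S.sY hτ hω hpar q4 b1
  have hlt : ε * ξ ^ 3 / 4000 ≤ 1 := by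
    have : ξ ^ 3 ≤ 1 := pow_le_one₀ hξ.le hξ1.le
    have : ε * ξ ^ 3 ≤ 1 * 1 := by gcongr
    linarith
  have b1' : T3 E Y Y X ≤ (ε * ξ ^ 3 / 4000) * n ^ 3 := by
    refine b1.trans (mul_le_mul_of_nonneg_right ?_ (by positivity))
    have : 0 ≤ 88000 * η / ξ ^ 2 := by positivity
    have : (ε * ξ ^ 3 / 4000) ^ 2 ≤ ε * ξ ^ 3 / 4000 := by
      rw [sq]; exact mul_le_of_le_one_left hω.le hlt
    linarith
  constructor
  · calc _ ≤ _ := eXXY_le hE S.dXY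
      _ ≤ _ := b2
      _ = ε * (ξ ^ 3 / 4000 * n ^ 3) := by ring
      _ ≤ _ := mul_le_mul_of_nonneg_left (den_lb hξ hn1 S.cX S.cY) hε.le
  · calc _ ≤ _ := eXXY_le hE S.dXY.symm
      _ ≤ _ := b1'
      _ = ε * (ξ ^ 3 / 4000 * n ^ 3) := by ring
      _ ≤ _ := mul_le_mul_of_nonneg_left (den_lb hξ hn1 S.cY S.cX) hε.le

lemma ec_congr {G G' : SimpleGraph V} {W A B : Finset V} (h : ∀ x ∈ W, ∀ y ∈ W, G.Adj x y ↔ G'.Adj x y)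
    (hA : A ⊆ W) (hB : B ⊆ W) : ec G A B = ec G' A B := by
  unfold ec
  exact sum_congr rfl fun a ha => sum_congr rfl fun b hb => by rw [h a (hA ha) b (hB hb)]

lemma Str.congr {G G' : SimpleGraph V} {W X Y Y1 Y2 Z1 Z2 : Finset V} {n ξ η : ℝ}
    (h : ∀ x ∈ W, ∀ y ∈ W, G.Adj x y ↔ G'.Adj x y)
    (S : Str G W n ξ η X Y Y1 Y2 Z1 Z2) : Str G' W n ξ η X Y Y1 Y2 Z1 Z2 := by
  have h' : ∀ x ∈ W, ∀ y ∈ W, Gᶜ.Adj x y ↔ G'ᶜ.Adj x y := by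
    intro x hx y hy
    simp [SimpleGraph.compl_adj, h x hx y hy]
  have h1Y : Y1 ⊆ W := by refine subset_trans ?_ S.sY; rw [← S.un]; exact subset_union_left
  have h2Y : Y2 ⊆ W := by refine subset_trans ?_ S.sY; rw [← S.un]; exact subset_union_right
  exact { S with
    eXY := by rw [← ec_congr h S.sX S.sY]; exact S.eXY
    eXZ1 := by rw [← ec_congr h S.sX S.sZ1]; exact S.eXZ1
    eXZ2 := by rw [← ec_congr h S.sX S.sZ2]; exact S.eXZ2
    eYZ1 := by rw [← ec_congr h' h1Y S.sZ1]; exact S.eYZ1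
    eYZ2 := by rw [← ec_congr h' h2Y S.sZ2]; exact S.eYZ2
    eYY := by rw [← ec_congr h' h1Y h2Y]; exact S.eYY }

variable [Fintype V]
def co (E : Finset (Finset V)) : Finset (Finset V) := (univ.powersetCard 3) \ E

lemma mem_co {E : Finset (Finset V)} {e : Finset V} : e ∈ co E ↔ e.card = 3 ∧ e ∉ E := by
  simp [co]

lemma co_unif {E : Finset (Finset V)} : ∀ e ∈ co E, e.card = 3 := fun _ h => (mem_co.1 h).1

lemma co_isD2 {E : Finset (Finset V)} (hE : ∀ e ∈ E, e.card = 3) : isD2 (co E) = isD2 E := by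
  funext S
  apply propext
  unfold isD2
  refine and_congr_right fun hS => ?_
  have h : (E.filter (fun e => e ⊆ S)).card + ((co E).filter (fun e => e ⊆ S)).card = 4 := by
    rw [← card_union_of_disjoint]
    · have : E.filter (fun e => e ⊆ S) ∪ (co E).filter (fun e => e ⊆ S) = S.powersetCard 3 := by
        ext e
        simp only [mem_union, mem_filter, mem_co, mem_powersetCard]
        have := hE e
        tauto
      rw [this, card_powersetCard, hS]; rfl
    · rw [disjoint_left]
      intro e h1 h2
      simp only [mem_filter, mem_co] at h1 h2
      exact h2.1.2 h1.1
  omega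

lemma co_QQ {E : Finset (Finset V)} (hE : ∀ e ∈ E, e.card = 3) (v : V) : QQ (co E) v = QQ E v := by
  unfold QQ; rw [co_isD2 hE]

lemma co_lk {E : Finset (Finset V)} {v x y : V} (hx : x ≠ v) (hy : y ≠ v) :
    (lk E v)ᶜ.Adj x y ↔ (lk (co E) v).Adj x y := by
  rw [SimpleGraph.compl_adj]
  unfold lk
  simp only [mem_co]
  have : x ≠ y → ({v, x, y} : Finset V).card = 3 := by
    intro h; simp [hx.symm, hy.symm, h]
  tauto

lemma co_eXXY {E : Finset (Finset V)} {X Y : Finset V} (hd : Disjoint X Y) :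
    (X.card.choose 2 : ℝ) * Y.card ≤ eXXY E X Y + eXXY (co E) X Y := by
  unfold eXXY
  norm_cast
  rw [← card_powersetCard, ← card_product]
  refine le_trans ?_ (card_union_le _ _)
  refine card_le_card_of_injOn (fun p => insert p.2 p.1) ?_ ?_
  · rintro ⟨p, y⟩ h
    simp only [coe_product, Set.mem_prod, mem_coe, mem_powersetCard] at h
    obtain ⟨⟨hp, hc⟩, hy⟩ := h
    have hyX : y ∉ X := fun h => disjoint_left.1 hd h hy
    have i1 : insert y p ∩ X = p := by
      rw [insert_inter_of_notMem hyX]; exact inter_eq_left.2 hp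
    have i2 : insert y p ∩ Y = {y} := by
      rw [insert_inter_of_mem hy, disjoint_iff_inter_eq_empty.1 (disjoint_of_subset_left hp hd)]; rfl
    have i3 : (insert y p).card = 3 := by rw [card_insert_of_notMem (fun h => hyX (hp h)), hc]
    simp only [coe_union, Set.mem_union, mem_coe, mem_filter, mem_co, i1, i2, i3, hc, card_singleton]
    tauto
  · rintro ⟨p, y⟩ h ⟨p', y'⟩ h' heq
    simp only [coe_product, Set.mem_prod, mem_coe, mem_powersetCard] at h h' heq
    obtain ⟨⟨hp, hc⟩, hy⟩ := h
    obtain ⟨⟨hp', hc'⟩, hy'⟩ := h'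
    have hyX : y ∉ X := fun h => disjoint_left.1 hd h hy
    have hyX' : y' ∉ X := fun h => disjoint_left.1 hd h hy'
    have i1 : insert y p ∩ X = p := by
      rw [insert_inter_of_notMem hyX]; exact inter_eq_left.2 hp
    have i1' : insert y' p' ∩ X = p' := by
      rw [insert_inter_of_notMem hyX']; exact inter_eq_left.2 hp'
    have i2 : insert y p ∩ Y = {y} := by
      rw [insert_inter_of_mem hy, disjoint_iff_inter_eq_empty.1 (disjoint_of_subset_left hp hd)]; rfl
    have i2' : insert y' p' ∩ Y = {y'} := by
      rw [insert_inter_of_mem hy', disjoint_iff_inter_eq_empty.1 (disjoint_of_subset_left hp' hd)]; rfl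
    rw [heq] at i1 i2
    have a := i1.symm.trans i1'
    have b := i2.symm.trans i2'
    rw [singleton_inj] at b
    rw [a, b]

/-- counts -/
lemma cnt4 (E : Finset (Finset V)) (W : Finset V) :
    ∑ a ∈ W, ∑ b ∈ W, ∑ c ∈ W, ∑ d ∈ W, ind (isD2 E {a, b, c, d}) ≤ 256 * (inducedD2Count E : ℝ) := by
  classical
  have hT : ∑ a ∈ W, ∑ b ∈ W, ∑ c ∈ W, ∑ d ∈ W, ind (isD2 E {a, b, c, d}) =
     (((W ×ˢ W ×ˢ W ×ˢ W).filter (fun p => isD2 E {p.1, p.2.1, p.2.2.1, p.2.2.2})).card : ℝ) := by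
    rw [← sum_ind_eq]
    simp only [sum_product]
  rw [hT]
  unfold inducedD2Count
  norm_cast
  rw [mul_comm]
  refine (card_le_card (t := (((Finset.univ : Finset V).powersetCard 4).filter
    (fun S => (E.filter (fun e => e ⊆ S)).card = 2)).biUnion (fun S => S ×ˢ S ×ˢ S ×ˢ S)) ?_).trans
      (card_biUnion_le_card_mul _ _ _ ?_)
  · rintro ⟨a, b, c, d⟩ h
    rw [mem_filter] at h
    obtain ⟨_, h4, h2⟩ := h
    rw [mem_biUnion]
    refine ⟨{a, b, c, d}, ?_, by simp⟩
    rw [mem_filter, mem_powersetCard]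
    exact ⟨⟨subset_univ _, h4⟩, h2⟩
  · intro S hS
    rw [mem_filter, mem_powersetCard] at hS
    simp only [card_product, hS.1.2]
    norm_num

lemma cnt3 (E : Finset (Finset V)) (v : V) (W : Finset V) :
    ∑ a ∈ W, ∑ b ∈ W, ∑ c ∈ W, ind (isD2 E {v, a, b, c}) ≤ 64 * (inducedD2CountVia E v : ℝ) := by
  classical
  have hT : ∑ a ∈ W, ∑ b ∈ W, ∑ c ∈ W, ind (isD2 E {v, a, b, c}) =
     (((W ×ˢ W ×ˢ W).filter (fun p => isD2 E {v, p.1, p.2.1, p.2.2})).card : ℝ) := by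
    rw [← sum_ind_eq]
    simp only [sum_product]
  rw [hT]
  unfold inducedD2CountVia
  norm_cast
  rw [mul_comm]
  refine (card_le_card (t := (((Finset.univ : Finset V).powersetCard 4).filter
    (fun S => v ∈ S ∧ (E.filter (fun e => e ⊆ S)).card = 2)).biUnion (fun S => S ×ˢ S ×ˢ S)) ?_).trans
      (card_biUnion_le_card_mul _ _ _ ?_)
  · rintro ⟨a, b, c⟩ h
    rw [mem_filter] at h
    obtain ⟨_, h4, h2⟩ := h
    rw [mem_biUnion]
    refine ⟨{v, a, b, c}, ?_, by simp⟩
    rw [mem_filter, mem_powersetCard]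
    exact ⟨⟨subset_univ _, h4⟩, by simp, h2⟩
  · intro S hS
    rw [mem_filter, mem_powersetCard] at hS
    simp only [card_product, hS.1.2]
    norm_num

lemma qi_le (E : Finset (Finset V)) (v a b c d : V) :
    qi (QQ E v) a b c d ≤ ind (isD2 E {a, b, c, d}) + ind (isD2 E {v, b, c, d}) + ind (isD2 E {v, a, c, d})
      + ind (isD2 E {v, a, b, d}) + ind (isD2 E {v, a, b, c}) := by
  have n1 := ind_nonneg (isD2 E {a, b, c, d})
  have n2 := ind_nonneg (isD2 E {v, b, c, d})
  have n3 := ind_nonneg (isD2 E {v, a, c, d})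
  have n4 := ind_nonneg (isD2 E {v, a, b, d})
  have n5 := ind_nonneg (isD2 E {v, a, b, c})
  unfold qi
  by_cases h : QQ E v {a, b, c, d}
  swap
  · rw [ind_false h]; positivity
  rw [ind_true h]
  rcases h with h | ⟨w, hw, h4, h⟩
  · rw [ind_true h]; linarith
  · have hne : a ≠ b ∧ a ≠ c ∧ a ≠ d ∧ b ≠ c ∧ b ≠ d ∧ c ≠ d := by
      refine ⟨?_, ?_, ?_, ?_, ?_, ?_⟩ <;> rintro rfl <;>
      · have : ∀ x y z : V, ({x, y, z} : Finset V).card ≤ 3 := fun _ _ _ => card_le_three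
        have e := h4
        simp only [insert_eq_of_mem, mem_insert, true_or, or_true, mem_singleton] at e
        first
          | exact absurd e (by have := this a c d; omega)
          | exact absurd e (by have := this b a d; omega)
          | exact absurd e (by have := this b c a; omega)
          | exact absurd e (by have := this a b d; omega)
          | exact absurd e (by have := this a c b; omega)
          | exact absurd e (by have := this a b c; omega)
    obtain ⟨ab, ac, ad, bc, bd, cd⟩ := hne
    simp only [mem_insert, mem_singleton] at hw
    rcases hw with rfl | rfl | rfl | rfl
    · have e : ({w, b, c, d} : Finset V).erase w = {b, c, d} := by ext; simp; grind
      rw [e] at h; rw [ind_true h]; linarith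
    · have e : ({a, w, c, d} : Finset V).erase w = {a, c, d} := by ext; simp; grind
      rw [e] at h; rw [ind_true h]; linarith
    · have e : ({a, b, w, d} : Finset V).erase w = {a, b, d} := by ext; simp; grind
      rw [e] at h; rw [ind_true h]; linarith
    · have e : ({a, b, c, w} : Finset V).erase w = {a, b, c} := by ext; simp; grind
      rw [e] at h; rw [ind_true h]; linarith

lemma q4_bound (E : Finset (Finset V)) (v : V) (W : Finset V) (n : ℝ) (hW : (W.card : ℝ) ≤ n) :
    ∑ a ∈ W, ∑ b ∈ W, ∑ c ∈ W, ∑ d ∈ W, qi (QQ E v) a b c d ≤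
      256 * (inducedD2Count E : ℝ) + 4 * (n * (64 * (inducedD2CountVia E v : ℝ))) := by
  have h3 := cnt3 E v W
  set J := ∑ a ∈ W, ∑ b ∈ W, ∑ c ∈ W, ind (isD2 E {v, a, b, c}) with hJ
  have k : ∑ a ∈ W, ∑ b ∈ W, ∑ c ∈ W, ∑ d ∈ W, qi (QQ E v) a b c d ≤
     ∑ a ∈ W, ∑ b ∈ W, ∑ c ∈ W, ∑ d ∈ W, (ind (isD2 E {a, b, c, d}) + ind (isD2 E {v, b, c, d}) + ind (isD2 E {v, a, c, d})
      + ind (isD2 E {v, a, b, d}) + ind (isD2 E {v, a, b, c})) :=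
    sum_le_sum fun _ _ => sum_le_sum fun _ _ => sum_le_sum fun _ _ => sum_le_sum fun _ _ => qi_le _ _ _ _ _ _
  simp only [sum_add_distrib] at k
  have t2 : ∑ a ∈ W, ∑ b ∈ W, ∑ c ∈ W, ∑ d ∈ W, ind (isD2 E {v, b, c, d}) = W.card * J := by
    simp only [hJ, sum_const, nsmul_eq_mul, mul_sum]
  have t3 : ∑ a ∈ W, ∑ b ∈ W, ∑ c ∈ W, ∑ d ∈ W, ind (isD2 E {v, a, c, d}) = W.card * J := by
    simp only [hJ, sum_const, nsmul_eq_mul, mul_sum]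
  have t4 : ∑ a ∈ W, ∑ b ∈ W, ∑ c ∈ W, ∑ d ∈ W, ind (isD2 E {v, a, b, d}) = W.card * J := by
    simp only [hJ, sum_const, nsmul_eq_mul, mul_sum]
  have t5 : ∑ a ∈ W, ∑ b ∈ W, ∑ c ∈ W, ∑ d ∈ W, ind (isD2 E {v, a, b, c}) = W.card * J := by
    simp only [hJ, sum_const, nsmul_eq_mul, mul_sum]
  rw [t2, t3, t4, t5] at k
  have h4 := cnt4 E W
  have : (W.card : ℝ) * J ≤ n * (64 * (inducedD2CountVia E v : ℝ)) := by
    have hw0 : (0 : ℝ) ≤ W.card := by positivity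
    have hn0 := hw0.trans hW
    have : 0 ≤ J := sum_nonneg fun _ _ => sum_nonneg fun _ _ => sum_nonneg fun _ _ => ind_nonneg _
    gcongr
  linarith

/-- density -/
lemma ec_lk {E : Finset (Finset V)} (hE : ∀ e ∈ E, e.card = 3) (v : V) :
    2 * ((E.filter (fun e => v ∈ e)).card : ℝ) ≤ ec (lk E v) (univ.erase v) (univ.erase v) := by
  classical
  have hT : ec (lk E v) (univ.erase v) (univ.erase v) =
     ((((univ.erase v) ×ˢ (univ.erase v)).filter (fun p => (lk E v).Adj p.1 p.2)).card : ℝ) := by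
    rw [← sum_ind_eq]
    simp only [sum_product, ec]
  rw [hT]
  norm_cast
  rw [mul_comm]
  rw [card_eq_sum_card_fiberwise (f := fun p : V × V => ({v, p.1, p.2} : Finset V))
    (t := E.filter (fun e => v ∈ e))]
  · rw [← smul_eq_mul]
    refine card_nsmul_le_sum _ _ _ ?_
    intro e he
    obtain ⟨he, hve⟩ := mem_filter.1 he
    have h2 : (e.erase v).card = 2 := by rw [card_erase_of_mem hve, hE e he]
    obtain ⟨x, y, hxy, hx⟩ := card_eq_two.1 h2
    have h3 : e = {v, x, y} := by rw [← hx, insert_erase hve]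
    have h4 : e = {v, y, x} := by rw [h3, pair_comm]
    have mx : x ∈ e.erase v := by rw [hx]; simp
    have my : y ∈ e.erase v := by rw [hx]; simp
    have nx := ne_of_mem_erase mx
    have ny := ne_of_mem_erase my
    have hc : ({(x, y), (y, x)} : Finset (V × V)).card = 2 := by
      rw [card_pair]; intro h; exact hxy (congrArg Prod.fst h)
    rw [← hc]
    apply card_le_card
    intro p hp
    simp only [mem_insert, mem_singleton] at hp
    simp only [mem_filter, mem_product, mem_erase, mem_univ, and_true]
    rcases hp with rfl | rfl
    · exact ⟨⟨⟨nx, ny⟩, hxy, by rw [← h3]; exact he⟩, h3.symm⟩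
    · exact ⟨⟨⟨ny, nx⟩, hxy.symm, by rw [← h4]; exact he⟩, h4.symm⟩
  · intro p hp
    simp only [coe_filter, Set.mem_setOf_eq] at hp ⊢
    exact ⟨hp.2.2, by simp⟩

lemma co_deg {E : Finset (Finset V)} (hE : ∀ e ∈ E, e.card = 3) (v : V) :
    (Fintype.card V - 1).choose 2 ≤ (E.filter (fun e => v ∈ e)).card + ((co E).filter (fun e => v ∈ e)).card := by
  have : ((univ.erase v).powersetCard 2).card = (Fintype.card V - 1).choose 2 := by
    rw [card_powersetCard, card_erase_of_mem (mem_univ v), card_univ]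
  rw [← this]
  refine le_trans ?_ (card_union_le _ _)
  refine card_le_card_of_injOn (fun p => insert v p) ?_ ?_
  · intro p hp
    simp only [mem_coe, mem_powersetCard] at hp
    have hvp : v ∉ p := fun h => by have := hp.1 h; simp at this
    have : (insert v p).card = 3 := by rw [card_insert_of_notMem hvp, hp.2]
    simp only [coe_union, Set.mem_union, mem_coe, mem_filter, mem_co, this, mem_insert_self]
    tauto
  · intro p hp q hq h
    simp only [mem_coe, mem_powersetCard] at hp hq h
    have hvp : v ∉ p := fun h => by have := hp.1 h; simp at this
    have hvq : v ∉ q := fun h => by have := hq.1 h; simp at this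
    rw [← erase_insert hvp, h, erase_insert hvq]

/-- density hypotheses -/
lemma dens {E : Finset (Finset V)} (hE : ∀ e ∈ E, e.card = 3) (v : V) {ξ n : ℝ} (hn : n = Fintype.card V)
    (hξ : 0 < ξ) (hn1 : 100 ≤ n) (h1 : ξ ≤ dLinkDensity E v) (h2 : dLinkDensity E v ≤ 1 - ξ) :
    0.95 * ξ * n ^ 2 ≤ ec (lk E v) (univ.erase v) (univ.erase v) ∧
    0.95 * ξ * n ^ 2 ≤ ec (lk E v)ᶜ (univ.erase v) (univ.erase v) := by
  have hc : (((Fintype.card V - 1).choose 2 : ℕ) : ℝ) = (n - 1) * (n - 2) / 2 := by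
    have : 1 ≤ Fintype.card V := by
      have : (1 : ℝ) ≤ Fintype.card V := by linarith
      exact_mod_cast this
    rw [Nat.cast_choose_two, Nat.cast_sub this, hn]
    push_cast; ring
  have hp : 0 < (n - 1) * (n - 2) / 2 := by
    have : 0 < n - 1 := by linarith
    have : 0 < n - 2 := by linarith
    positivity
  have hl : 0.95 * ξ * n ^ 2 ≤ 2 * (ξ * ((n - 1) * (n - 2) / 2)) := by
    have : 0.95 * n ^ 2 ≤ (n - 1) * (n - 2) := by nlinarith
    nlinarith
  unfold dLinkDensity at h1 h2
  rw [hc, le_div_iff₀ hp] at h1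
  rw [hc, div_le_iff₀ hp] at h2
  have h3 : (n - 1) * (n - 2) / 2 ≤ (E.filter (fun e => v ∈ e)).card + ((co E).filter (fun e => v ∈ e)).card := by
    rw [← hc]; exact_mod_cast co_deg hE v
  have e1 := ec_lk hE v
  have e2 := ec_lk (co_unif (E := E)) v
  have e3 : ec (lk E v)ᶜ (univ.erase v) (univ.erase v) = ec (lk (co E) v) (univ.erase v) (univ.erase v) :=
    ec_congr (W := univ.erase v) (fun x hx y hy => co_lk (ne_of_mem_erase hx) (ne_of_mem_erase hy))
      (subset_refl _) (subset_refl _)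
  rw [e3]
  constructor <;> linarith
end hyper3

set_option exponentiation.threshold 2000
lemma concl {V : Type} [Fintype V] [DecidableEq V] (E : Finset (Finset V)) (v : V) {ξ ε n : ℝ}
    (hn : n = Fintype.card V) (hn1 : 100 ≤ ξ * n) {X Y : Finset V}
    (sX : X ⊆ univ.erase v) (sY : Y ⊆ univ.erase v) (hd : Disjoint X Y)
    (cX : ξ / 10 * n ≤ X.card) (cY : ξ / 10 * n ≤ Y.card)
    (cS : (((univ.erase v) \ (X ∪ Y)).card : ℝ) ≤ 2 / 5 * ξ * n) (hh : EpsHomogeneous E X Y ε) :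
    ∃ X Y S : Finset V,
          Disjoint X Y ∧ Disjoint X S ∧ Disjoint Y S ∧
          X ∪ Y ∪ S = Finset.univ ∧
          (X.card : ℝ) ≥ ξ / 10 * (Fintype.card V : ℝ) ∧
          (Y.card : ℝ) ≥ ξ / 10 * (Fintype.card V : ℝ) ∧
          (S.card : ℝ) ≤ ξ / 2 * (Fintype.card V : ℝ) ∧
          EpsHomogeneous E X Y ε := by
  rw [← hn]
  refine ⟨X, Y, univ \ (X ∪ Y), hd, ?_, ?_, ?_, cX, cY, ?_, hh⟩
  · exact disjoint_of_subset_left subset_union_left disjoint_sdiff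
  · exact disjoint_of_subset_left subset_union_right disjoint_sdiff
  · exact union_sdiff_of_subset (subset_univ _)
  · have h1 : univ \ (X ∪ Y) ⊆ insert v ((univ.erase v) \ (X ∪ Y)) := by
      intro x hx
      simp only [mem_sdiff, mem_univ, true_and, mem_insert, mem_erase, and_true] at hx ⊢
      tauto
    have h2 : ((univ \ (X ∪ Y)).card : ℝ) ≤ ((univ.erase v) \ (X ∪ Y)).card + 1 := by
      exact_mod_cast (card_le_card h1).trans (card_insert_le _ _)
    linarith

lemma core {V : Type} [Fintype V] [DecidableEq V] (E : Finset (Finset V)) (v : V)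
    (hE : ∀ e ∈ E, e.card = 3) {ξ ε n τ η : ℝ}
    (hn : n = Fintype.card V) (hξ : 0 < ξ) (hξ1 : ξ < 1) (hε : 0 < ε) (hε1 : ε < 1)
    (hn1 : 100 ≤ ξ * n) (h1 : ξ ≤ dLinkDensity E v) (h2 : dLinkDensity E v ≤ 1 - ξ)
    (hη : 0 < η) (hηξ : η ≤ ξ / 100) (hτη : τ ≤ η) (hτ : 1 ≤ τ * n)
    (hpar : 2 * τ + 2 * (88000 * η / ξ ^ 2) ≤ (ε * ξ ^ 3 / 4000) ^ 2)
    (hτQ : τ ≤ (η ^ 5 / 1000) ^ 4 * (ξ / 5) ^ 4)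
    (c4 : 512 * (inducedD2Count E : ℝ) ≤ τ * n ^ 4)
    (c3 : 512 * (inducedD2CountVia E v : ℝ) ≤ τ * n ^ 3) :
    ∃ X Y S : Finset V,
          Disjoint X Y ∧ Disjoint X S ∧ Disjoint Y S ∧
          X ∪ Y ∪ S = Finset.univ ∧
          (X.card : ℝ) ≥ ξ / 10 * (Fintype.card V : ℝ) ∧
          (Y.card : ℝ) ≥ ξ / 10 * (Fintype.card V : ℝ) ∧
          (S.card : ℝ) ≤ ξ / 2 * (Fintype.card V : ℝ) ∧
          EpsHomogeneous E X Y ε := by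
  have hn0 : 0 < n := by by_contra h; push Not at h; nlinarith
  have hn100 : 100 ≤ n := by nlinarith
  obtain ⟨d1, d2⟩ := dens hE v hn hξ hn100 h1 h2
  have hWc : (((univ.erase v : Finset V)).card : ℝ) = n - 1 := by
    rw [card_erase_of_mem (mem_univ v), card_univ, Nat.cast_sub, hn]
    · simp
    · have : (1 : ℝ) ≤ Fintype.card V := by linarith
      exact_mod_cast this
  have hW : (((univ.erase v : Finset V)).card : ℝ) ≤ n := by linarith
  have q4 : ∑ a ∈ univ.erase v, ∑ b ∈ univ.erase v, ∑ c ∈ univ.erase v, ∑ d ∈ univ.erase v,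
      qi (QQ E v) a b c d ≤ τ * n ^ 4 := by
    refine (q4_bound E v _ n hW).trans ?_
    have : n * (512 * (inducedD2CountVia E v : ℝ)) ≤ n * (τ * n ^ 3) := by gcongr
    linarith
  have j3 : ∑ a ∈ univ.erase v, ∑ b ∈ univ.erase v, ∑ c ∈ univ.erase v,
      ind (isD2 E {v, a, b, c}) ≤ τ * n ^ 3 := by
    refine (cnt3 E v _).trans ?_
    have : (0:ℝ) ≤ inducedD2CountVia E v := by positivity
    linarith
  have hv : v ∉ univ.erase v := by simp
  have hQ : ∑ a ∈ univ.erase v, ∑ b ∈ univ.erase v, ∑ c ∈ univ.erase v, ∑ d ∈ univ.erase v,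
      qi (QQ E v) a b c d ≤ (η ^ 5 / 1000) ^ 4 * (ξ / 5 * n) ^ 4 := by
    refine q4.trans ?_
    calc τ * n ^ 4 ≤ (η ^ 5 / 1000) ^ 4 * (ξ / 5) ^ 4 * n ^ 4 := by gcongr
      _ = _ := by ring
  rcases graph_main (P4_QQ hE) (univ.erase v) n ξ η hn1 hξ hξ1 hη hηξ hW (by linarith) d1 d2 hQ with
    ⟨X, Y, Y1, Y2, Z1, Z2, S⟩ | ⟨X, Y, Y1, Y2, Z1, Z2, S⟩
  · obtain ⟨b1, b2⟩ := hom_of_str hE hv hW hn1 hξ hξ1 hε hε1 hτη hη.le hτ hpar S q4 j3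
    have p1 := den_lb hξ hn1 S.cX S.cY
    have p2 := den_lb hξ hn1 S.cY S.cX
    have p0 : 0 < ξ ^ 3 / 4000 * n ^ 3 := by positivity
    refine concl E v hn hn1 S.sX S.sY S.dXY S.cX S.cY S.cS (Or.inr ⟨?_, ?_⟩)
    · unfold dXXY; rw [div_le_iff₀ (by linarith)]; exact b1
    · unfold dXXY; rw [div_le_iff₀ (by linarith)]; exact b2
  · have S' := S.congr (G' := lk (co E) v)
      (fun x hx y hy => co_lk (ne_of_mem_erase hx) (ne_of_mem_erase hy))
    rw [← co_QQ hE] at q4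
    rw [← co_isD2 hE] at j3
    obtain ⟨b1, b2⟩ := hom_of_str co_unif hv hW hn1 hξ hξ1 hε hε1 hτη hη.le hτ hpar S' q4 j3
    have p1 := den_lb hξ hn1 S.cX S.cY
    have p2 := den_lb hξ hn1 S.cY S.cX
    have p0 : 0 < ξ ^ 3 / 4000 * n ^ 3 := by positivity
    have k1 := co_eXXY (E := E) S.dXY
    have k2 := co_eXXY (E := E) S.dXY.symm
    refine concl E v hn hn1 S.sX S.sY S.dXY S.cX S.cY S.cS (Or.inl ⟨?_, ?_⟩)
    · unfold dXXY; rw [ge_iff_le, le_div_iff₀ (by linarith)]; linarith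
    · unfold dXXY; rw [ge_iff_le, le_div_iff₀ (by linarith)]; linarith

/-- The main lemma: with polynomial dependencies, a vertex with link density bounded away
from 0 and 1 in a hypergraph with few induced copies of `D₂` yields an `ε`-homogeneous
partition into two large parts and a small leftover set. -/
theorem main_lemma :
    ∃ C : ℝ, C > 0 ∧ ∀ ξ ε : ℝ, 0 < ξ → ξ < 1 → 0 < ε → ε < 1 →
      ∀ (V : Type) [Fintype V] [DecidableEq V] (E : Finset (Finset V)) (v : V),
        (∀ e ∈ E, e.card = 3) →
        (Fintype.card V : ℝ) ≥ C * (ξ * ε) ^ (-C) →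
        ξ ≤ dLinkDensity E v →
        dLinkDensity E v ≤ 1 - ξ →
        (inducedD2Count E : ℝ) < ((ξ * ε) ^ C / C) * (Fintype.card V : ℝ) ^ 4 →
        (inducedD2CountVia E v : ℝ) < ((ξ * ε) ^ C / C) * (Fintype.card V : ℝ) ^ 3 →
        ∃ X Y S : Finset V,
          Disjoint X Y ∧ Disjoint X S ∧ Disjoint Y S ∧
          X ∪ Y ∪ S = Finset.univ ∧
          (X.card : ℝ) ≥ ξ / 10 * (Fintype.card V : ℝ) ∧
          (Y.card : ℝ) ≥ ξ / 10 * (Fintype.card V : ℝ) ∧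
          (S.card : ℝ) ≤ ξ / 2 * (Fintype.card V : ℝ) ∧
          EpsHomogeneous E X Y ε := by
  obtain ⟨K, hK⟩ : ∃ K : ℝ, K = 10 ^ 300 := ⟨_, rfl⟩
  have hK164 : 164 ≤ K := by rw [hK]; norm_num
  have hK0 : 0 < K := by linarith
  refine ⟨K, hK0, ?_⟩
  intro ξ ε hξ hξ1 hε hε1 V _ _ E v hE hn h1 h2 c4 c3
  obtain ⟨n, hnn⟩ : ∃ n : ℝ, n = (Fintype.card V : ℝ) := ⟨_, rfl⟩
  rw [← hnn] at hn c4 c3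
  obtain ⟨p, hp⟩ : ∃ p, p = ξ * ε := ⟨_, rfl⟩
  rw [← hp] at hn c4 c3
  have hp0 : 0 < p := by rw [hp]; positivity
  have hpξ : p ≤ ξ := by rw [hp]; nlinarith
  have hp1 : p ≤ 1 := by linarith
  have r1 : p ^ K ≤ p ^ 164 := by
    calc p ^ K ≤ p ^ (164 : ℝ) := Real.rpow_le_rpow_of_exponent_ge hp0 hp1 hK164
      _ = p ^ ((164 : ℕ) : ℝ) := by norm_num
      _ = p ^ 164 := Real.rpow_natCast p 164
  have rK : 0 < p ^ K := Real.rpow_pos_of_pos hp0 K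
  have hn2 : K ≤ n * p ^ 164 := by
    rw [Real.rpow_neg hp0.le] at hn
    have : K = K * (p ^ K)⁻¹ * p ^ K := by field_simp
    calc K = K * (p ^ K)⁻¹ * p ^ K := this
      _ ≤ n * p ^ 164 := by
        have : 0 ≤ n := by rw [hnn]; positivity
        gcongr
  have hP0 : 0 < p ^ 164 := by positivity
  have hP1 : p ^ 164 ≤ p := by
    calc p ^ 164 ≤ p ^ 1 := pow_le_pow_of_le_one hp0.le hp1 (by norm_num)
      _ = p := pow_one p
  have hP8 : p ^ 8 ≤ p := by
    calc p ^ 8 ≤ p ^ 1 := pow_le_pow_of_le_one hp0.le hp1 (by norm_num)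
      _ = p := pow_one p
  have hP164 : p ^ 164 ≤ p ^ 8 := pow_le_pow_of_le_one hp0.le hp1 (by norm_num)
  have hn0 : 0 < n := by
    by_contra h; push Not at h
    have := mul_nonpos_of_nonpos_of_nonneg h hP0.le
    linarith
  have hKb : (10:ℝ) ^ 296 ≤ K := by rw [hK]; norm_num
  have hδ : 512 * (p ^ K / K) ≤ p ^ 164 / 10 ^ 295 := by
    calc 512 * (p ^ K / K) ≤ 512 * (p ^ 164 / K) := by gcongr
      _ = p ^ 164 * (512 / 10 ^ 300) := by rw [hK]; ring
      _ ≤ p ^ 164 * (1 / 10 ^ 295) := by gcongr ?_ * ?_; norm_num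
      _ = _ := by ring
  refine core E v hE (n := n) (τ := p ^ 164 / 10 ^ 295) (η := p ^ 8 / 10 ^ 14) hnn hξ hξ1 hε hε1 ?_ h1 h2
    (by positivity) ?_ ?_ ?_ ?_ ?_ ?_ ?_
  · have : n * p ^ 164 ≤ n * ξ := by gcongr; linarith
    have : (100:ℝ) ≤ K := by linarith
    linarith
  · rw [div_le_div_iff₀ (by positivity) (by norm_num)]
    nlinarith
  · calc p ^ 164 / 10 ^ 295 ≤ p ^ 8 / 10 ^ 295 := by gcongr
      _ ≤ p ^ 8 / 10 ^ 14 := by gcongr <;> norm_num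
  · rw [div_mul_eq_mul_div, le_div_iff₀ (by positivity)]
    have : (10:ℝ) ^ 295 ≤ 10 ^ 296 := by norm_num
    linarith
  · have e8 : ε ^ 8 ≤ ε ^ 2 := pow_le_pow_of_le_one hε.le hε1.le (by norm_num)
    have x8 : ξ ^ 8 ≤ ξ ^ 6 := pow_le_pow_of_le_one hξ.le hξ1.le (by norm_num)
    have a1 : 2 * (88000 * (p ^ 8 / 10 ^ 14) / ξ ^ 2) ≤ ξ ^ 6 * ε ^ 2 * (176000 / 10 ^ 14) := by
      calc 2 * (88000 * (p ^ 8 / 10 ^ 14) / ξ ^ 2) = ξ ^ 6 * ε ^ 8 * (176000 / 10 ^ 14) := by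
            rw [hp]; field_simp; norm_num
        _ ≤ _ := by gcongr
    have a2 : p ^ 164 / 10 ^ 295 ≤ ξ ^ 6 * ε ^ 2 * (1 / 10 ^ 14) := by
      calc p ^ 164 / 10 ^ 295 ≤ p ^ 8 / 10 ^ 295 := by gcongr
        _ ≤ p ^ 8 / 10 ^ 14 := by gcongr <;> norm_num
        _ = ξ ^ 8 * ε ^ 8 * (1 / 10 ^ 14) := by rw [hp]; ring
        _ ≤ _ := by gcongr
    have a3 : 0 < ξ ^ 6 * ε ^ 2 := by positivity
    have a4 : (ε * ξ ^ 3 / 4000) ^ 2 = ξ ^ 6 * ε ^ 2 * (1 / 16000000) := by ring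
    rw [a4]
    linarith
  · have a1 : p ^ 164 ≤ p ^ 160 * ξ ^ 4 := by
      calc p ^ 164 = p ^ 160 * p ^ 4 := by ring
        _ ≤ _ := by gcongr
    calc p ^ 164 / 10 ^ 295 ≤ p ^ 160 * ξ ^ 4 / 10 ^ 295 := by gcongr
      _ ≤ p ^ 160 * ξ ^ 4 * (1 / (10 ^ 292 * 625)) := by
        rw [div_eq_mul_inv]; gcongr ?_ * ?_; norm_num
      _ = _ := by ring
  · calc 512 * (inducedD2Count E : ℝ) ≤ 512 * (p ^ K / K * n ^ 4) := by gcongr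
      _ = 512 * (p ^ K / K) * n ^ 4 := by ring
      _ ≤ _ := by gcongr
  · calc 512 * (inducedD2CountVia E v : ℝ) ≤ 512 * (p ^ K / K * n ^ 3) := by gcongr
      _ = 512 * (p ^ K / K) * n ^ 3 := by ring
      _ ≤ _ := by gcongr
end
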